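/- arXiv:0808.3206 — 2 statements merged into one kernel-verified Lean document; each statement's English description precedes it below -/
import Mathlib

section
/- Let S be a simple arc whose endpoints lie on a simple closed curve P and whose interior lies in the interior of P. Then P \ {endpoints of S} consists of two arcs A₁, A₂, and the interior of P minus S consists of exactly two connected components T₁ and T₂, bounded by A₁ ∪ S and A₂ ∪ S respectively. -/
/-- A simple closed curve in the plane: the image of a continuous injection of the circle. -/
def IsSimpleClosedCurve (P : Set (ℝ × ℝ)) : Prop :=
  ∃ f : AddCircle (1 : ℝ) → ℝ × ℝ, Continuous f ∧ Function.Injective f ∧ Set.range f = P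

/-- The interior of a simple closed curve: points of the complement whose connected
component in the complement is bounded. -/
def JordanInterior (P : Set (ℝ × ℝ)) : Set (ℝ × ℝ) :=
  {y | y ∉ P ∧ Bornology.IsBounded (connectedComponentIn Pᶜ y)}

/-- The exterior of a simple closed curve: points of the complement whose connected
component in the complement is unbounded. -/
def JordanExterior (P : Set (ℝ × ℝ)) : Set (ℝ × ℝ) :=
  {y | y ∉ P ∧ ¬ Bornology.IsBounded (connectedComponentIn Pᶜ y)}

/-- A simple arc in the plane from `a` to `b` with image `γ`. -/
def IsArc (γ : Set (ℝ × ℝ)) (a b : ℝ × ℝ) : Prop :=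
  ∃ f : ℝ → ℝ × ℝ, ContinuousOn f (Set.Icc 0 1) ∧ Set.InjOn f (Set.Icc 0 1) ∧
    f 0 = a ∧ f 1 = b ∧ γ = f '' Set.Icc 0 1

/-!
Winding numbers are the obstruction to continuous logarithms, and a nonzero power of `z - x` has no
continuous logarithm on the frontier of a bounded open set containing `x`. Hence a simple closed
curve has nonzero winding number about every point of its interior. If the interior had two
components, then for `x` and `y` in different ones suitable powers of `z - x` and `z - y` would have
a product with winding number zero, hence with a logarithm on the frontier of the component of `x`,
where `z - y` is harmless. The frontier of the interior is the whole curve because any nowhere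
vanishing function has a logarithm on a proper closed subset of the curve. For the curve `P = α ∪ β`
and the cross-cut `γ`, the winding numbers satisfy `w(α, β) = w(α, γ) - w(β, γ)`, so a point inside
`P` and off `γ` is inside `α ∪ γ` or inside `β ∪ γ`, and the two insides can overlap only if they,
and hence their frontiers, coincide.
-/

namespace JordanArc

open Set Topology unitInterval

section Logarithms

variable {X Y : Type*} [TopologicalSpace X] [TopologicalSpace Y] {F G : X → ℂ} {K L : Set X}

/-- `F` has a continuous logarithm on `K`, i.e. `F : K → ℂ \ {0}` is null-homotopic when `K` is a
nice space. Winding numbers are the obstruction to this property. -/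
def HasLogOn (F : X → ℂ) (K : Set X) : Prop :=
  ∃ k : X → ℂ, ContinuousOn k K ∧ ∀ z ∈ K, Complex.exp (k z) = F z

lemma HasLogOn.mono (h : HasLogOn F K) (hLK : L ⊆ K) : HasLogOn F L :=
  let ⟨k, hk, hkF⟩ := h
  ⟨k, hk.mono hLK, fun z hz => hkF z (hLK hz)⟩

lemma HasLogOn.congr (h : HasLogOn F K) (hFG : EqOn F G K) : HasLogOn G K :=
  let ⟨k, hk, hkF⟩ := h
  ⟨k, hk, fun z hz => (hkF z hz).trans (hFG hz)⟩

lemma HasLogOn.comp {f : Y → X} {M : Set Y} (h : HasLogOn F K) (hf : ContinuousOn f M)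
    (hfM : MapsTo f M K) : HasLogOn (F ∘ f) M :=
  let ⟨k, hk, hkF⟩ := h
  ⟨k ∘ f, hk.comp hf hfM, fun y hy => hkF (f y) (hfM hy)⟩

lemma hasLogOn_of_mem_slitPlane (hF : ContinuousOn F K) (h : ∀ z ∈ K, F z ∈ Complex.slitPlane) :
    HasLogOn F K :=
  ⟨_, hF.clog h, fun z hz => Complex.exp_log (Complex.slitPlane_ne_zero (h z hz))⟩

lemma hasLogOn_const {c : ℂ} (hc : c ≠ 0) : HasLogOn (fun _ : X => c) K :=
  ⟨fun _ => Complex.log c, continuousOn_const, fun _ _ => Complex.exp_log hc⟩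

lemma hasLogOn_univ [SimplyConnectedSpace X] [LocallyPathConnectedSpace X] (hF : Continuous F)
    (hF0 : ∀ x, F x ≠ 0) : HasLogOn F univ := by
  obtain ⟨x₀⟩ : Nonempty X := inferInstance
  obtain ⟨k, ⟨-, hk⟩, -⟩ := Complex.isCoveringMapOn_exp.existsUnique_continuousMap_lifts
    ⟨F, hF⟩ (Complex.exp_log (hF0 x₀)) hF0
  exact ⟨k, k.continuous.continuousOn, fun x _ => congrFun hk x⟩

/-- Extending the logarithm of `F * G` from `frontier K` to `K` and dividing by `G` continues `F` to
a nowhere vanishing function on the whole space. -/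
lemma HasLogOn.closure_compl [NormalSpace X] [SimplyConnectedSpace X] [LocallyPathConnectedSpace X]
    (h : HasLogOn (F * G) (frontier K)) (hK : IsClosed K) (hF : ContinuousOn F (closure Kᶜ))
    (hF0 : ∀ z ∈ closure Kᶜ, F z ≠ 0) (hG : ContinuousOn G K) (hG0 : ∀ z ∈ K, G z ≠ 0) :
    HasLogOn F (closure Kᶜ) := by
  classical
  obtain ⟨k, hk, hkFG⟩ := h
  obtain ⟨H, hH⟩ := ContinuousMap.exists_restrict_eq isClosed_frontier
    ⟨(frontier K).domRestrict k, continuousOn_iff_continuous_domRestrict.mp hk⟩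
  have hHF : ∀ z ∈ frontier K, Complex.exp (H z) / G z = F z := fun z hz => by
    have hHk : H z = k z := congrArg (fun f : C(frontier K, ℂ) => f ⟨z, hz⟩) hH
    rw [hHk, hkFG z hz, Pi.mul_apply, mul_div_cancel_right₀ _ (hG0 z (hK.frontier_subset hz))]
  let E : X → ℂ := K.piecewise (fun z => Complex.exp (H z) / G z) F
  have hE : Continuous E := by
    refine continuous_piecewise hHF ?_ hF
    rw [hK.closure_eq]
    exact H.continuous.cexp.continuousOn.div hG hG0
  have hEF : EqOn E F (closure Kᶜ) := fun z hz => by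
    by_cases hzK : z ∈ K
    · exact (piecewise_eq_of_mem _ _ _ hzK).trans
        (hHF z (frontier_eq_closure_inter_closure.ge ⟨subset_closure hzK, hz⟩))
    · exact piecewise_eq_of_notMem _ _ _ hzK
  have hE0 : ∀ z, E z ≠ 0 := fun z => by
    by_cases hzK : z ∈ K
    · rw [show E z = _ from piecewise_eq_of_mem _ _ _ hzK]
      exact div_ne_zero (Complex.exp_ne_zero _) (hG0 z hzK)
    · exact (hEF (subset_closure hzK)).trans_ne (hF0 z (subset_closure hzK))
  exact ((hasLogOn_univ hE hE0).mono (subset_univ _)).congr hEF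

lemma hasLogOn_univ_unitInterval {f : I → ℂ} (hf : Continuous f) (hf0 : ∀ t, f t ≠ 0) :
    HasLogOn f univ := by
  have hext : HasLogOn (IccExtend zero_le_one f) univ :=
    hasLogOn_univ hf.Icc_extend' fun _ => hf0 _
  exact (hext.comp continuous_subtype_val.continuousOn (mapsTo_univ _ _)).congr
    fun t _ => IccExtend_val _ f t

lemma sub_eq_sub_of_exp_eq (hK : IsPreconnected K) {g k : X → ℂ} (hg : ContinuousOn g K)
    (hk : ContinuousOn k K) (hexp : ∀ z ∈ K, Complex.exp (g z) = Complex.exp (k z)) {a b : X}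
    (ha : a ∈ K) (hb : b ∈ K) : g a - k a = g b - k b := by
  have hone : ∀ z ∈ K, Complex.exp (g z - k z) = 1 := fun z hz => by
    rw [Complex.exp_sub, hexp z hz, div_self (Complex.exp_ne_zero _)]
  exact Complex.isCoveringMap_exp.constOn_of_comp hK (hg.sub hk)
    (fun a ha b hb => Subtype.ext ((hone a ha).trans (hone b hb).symm)) ha hb

open Classical in
/-- The total increment over `[0, 1]` of a continuous logarithm of `f`; junk value `0` if `f` has
none. -/
noncomputable def logIncrement (f : I → ℂ) : ℂ :=
  if h : HasLogOn f univ then h.choose 1 - h.choose 0 else 0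

lemma logIncrement_eq {f g : I → ℂ} (hg : Continuous g) (hgf : ∀ t, Complex.exp (g t) = f t) :
    logIncrement f = g 1 - g 0 := by
  have h : HasLogOn f univ := ⟨g, hg.continuousOn, fun t _ => hgf t⟩
  obtain ⟨hk, hkf⟩ := h.choose_spec
  have hdiff := sub_eq_sub_of_exp_eq isPreconnected_univ hk hg.continuousOn
    (fun t _ => (hkf t trivial).trans (hgf t).symm) (mem_univ 0) (mem_univ 1)
  rw [logIncrement, dif_pos h]
  linear_combination -hdiff

lemma logIncrement_zpow_mul_zpow {f g : I → ℂ} (hf : HasLogOn f univ) (hg : HasLogOn g univ)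
    (m n : ℤ) : logIncrement (f ^ m * g ^ n) = m * logIncrement f + n * logIncrement g := by
  obtain ⟨u, hu, huf⟩ := hf
  obtain ⟨v, hv, hvg⟩ := hg
  rw [continuousOn_univ] at hu hv
  rw [logIncrement_eq hu fun t => huf t trivial, logIncrement_eq hv fun t => hvg t trivial,
    logIncrement_eq (g := fun t => m * u t + n * v t) (by fun_prop)]
  · ring
  · intro t
    rw [Complex.exp_add, Complex.exp_int_mul, Complex.exp_int_mul, huf t trivial, hvg t trivial]
    rfl

end Logarithms

section Bigons

variable {X : Type*} [TopologicalSpace X] {p q : X} {C K : Set X} {α β γ : Path p q} {F G : X → ℂ}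

/-- The set `C` is a simple closed curve presented as the union of two simple arcs `α` and `β` from
`p` to `q` that meet only at these endpoints. -/
structure IsBigon (C : Set X) (α β : Path p q) : Prop where
  injective_left : Function.Injective α
  injective_right : Function.Injective β
  inter_subset : range α ∩ range β ⊆ {p, q}
  union_eq : range α ∪ range β = C

/-- The winding number around `0` of `F` along the loop that follows `α` and returns along `β`,
as a complex number. -/
noncomputable def windingNumber (F : X → ℂ) (α β : Path p q) : ℂ :=
  (logIncrement (F ∘ α) - logIncrement (F ∘ β)) / (2 * Real.pi * Complex.I)

lemma windingNumber_sub_windingNumber :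
    windingNumber F α γ - windingNumber F β γ = windingNumber F α β := by
  simp only [windingNumber]
  ring

lemma pair_subset_range (γ : Path p q) : {p, q} ⊆ range γ :=
  pair_subset ⟨0, γ.source⟩ ⟨1, γ.target⟩

lemma image_Ioo_eq_range_diff (hγ : Function.Injective γ) : γ '' Ioo 0 1 = range γ \ {p, q} := by
  have hIoo : (Ioo 0 1 : Set I) = univ \ {0, 1} := by
    ext t
    simp [unitInterval.pos_iff_ne_zero, unitInterval.lt_one_iff_ne_one]
  rw [hIoo, image_sdiff hγ, image_univ, image_pair, γ.source, γ.target]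

lemma isConnected_range_diff (hγ : Function.Injective γ) : IsConnected (range γ \ {p, q}) := by
  rw [← image_Ioo_eq_range_diff hγ]
  exact (isConnected_Ioo zero_lt_one).image γ γ.continuous.continuousOn

lemma range_subset_closure_diff (hγ : Function.Injective γ) :
    range γ ⊆ closure (range γ \ {p, q}) := by
  have hI : closure (Ioo 0 1 : Set I) = univ :=
    (closure_Ioo zero_ne_one).trans (Icc_bot_top (α := I))
  rw [← image_Ioo_eq_range_diff hγ, ← image_univ, ← hI]
  exact image_closure_subset_closure_image γ.continuous

namespace IsBigon

lemma symm (h : IsBigon C α β) : IsBigon C β α :=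
  ⟨h.injective_right, h.injective_left, inter_comm _ _ ▸ h.inter_subset,
    union_comm _ _ ▸ h.union_eq⟩

lemma map {Y : Type*} [TopologicalSpace Y] (h : IsBigon C α β) {f : X → Y} (hf : Continuous f)
    (hfi : Function.Injective f) : IsBigon (f '' C) (α.map hf) (β.map hf) where
  injective_left := hfi.comp h.injective_left
  injective_right := hfi.comp h.injective_right
  inter_subset := by
    simp only [Path.map_coe, range_comp, ← image_inter hfi, ← image_pair]
    exact image_mono h.inter_subset
  union_eq := by
    simp only [Path.map_coe, range_comp, ← image_union, h.union_eq]

lemma range_left_subset (h : IsBigon C α β) : range α ⊆ C := h.union_eq ▸ subset_union_left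

lemma left_mem (h : IsBigon C α β) (t : I) : α t ∈ C := h.range_left_subset ⟨t, rfl⟩

lemma right_mem (h : IsBigon C α β) (t : I) : β t ∈ C := h.symm.left_mem t

lemma disjoint_diff (h : IsBigon C α β) : Disjoint (range α \ {p, q}) (range β) :=
  disjoint_left.mpr fun _ hα hβ => hα.2 (h.inter_subset ⟨hα.1, hβ⟩)

lemma isCompact (h : IsBigon C α β) : IsCompact C :=
  h.union_eq ▸ (isCompact_range α.continuous).union (isCompact_range β.continuous)

lemma hasLogOn_comp_left (h : IsBigon C α β) (hF : ContinuousOn F C) (hF0 : ∀ z ∈ C, F z ≠ 0) :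
    HasLogOn (F ∘ α) univ :=
  hasLogOn_univ_unitInterval (hF.comp_continuous α.continuous h.left_mem)
    fun t => hF0 _ (h.left_mem t)

lemma exists_logs (h : IsBigon C α β) (hF : ContinuousOn F C) (hF0 : ∀ z ∈ C, F z ≠ 0) :
    ∃ g k : I → ℂ, Continuous g ∧ Continuous k ∧ (∀ t, Complex.exp (g t) = F (α t)) ∧
      (∀ t, Complex.exp (k t) = F (β t)) ∧ g 0 = k 0 ∧
      g 1 - k 1 = windingNumber F α β * (2 * Real.pi * Complex.I) := by
  obtain ⟨g, hg, hgF⟩ := h.hasLogOn_comp_left hF hF0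
  obtain ⟨k, hk, hkF⟩ := h.symm.hasLogOn_comp_left hF hF0
  rw [continuousOn_univ] at hg hk
  have hexp : Complex.exp (g 0) = Complex.exp (k 0) := by
    rw [hgF 0 trivial, hkF 0 trivial]
    simp
  refine ⟨g, fun t => k t + (g 0 - k 0), hg, hk.add continuous_const, fun t => hgF t trivial,
    fun t => ?_, (add_sub_cancel _ _).symm, ?_⟩
  · rw [Complex.exp_add, Complex.exp_sub, hexp, div_self (Complex.exp_ne_zero _), mul_one]
    exact hkF t trivial
  · rw [windingNumber, div_mul_cancel₀ _ Complex.two_pi_I_ne_zero,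
      logIncrement_eq hg fun t => hgF t trivial, logIncrement_eq hk fun t => hkF t trivial]
    ring

lemma exists_intCast_eq_windingNumber (h : IsBigon C α β) (hF : ContinuousOn F C)
    (hF0 : ∀ z ∈ C, F z ≠ 0) : ∃ n : ℤ, (n : ℂ) = windingNumber F α β := by
  obtain ⟨g, k, -, -, hgF, hkF, -, hgk⟩ := h.exists_logs hF hF0
  have hexp : Complex.exp (g 1 - k 1) = 1 := by
    rw [Complex.exp_sub, hgF, hkF, α.target, β.target, div_self]
    exact hF0 q (α.target ▸ h.left_mem 1)
  obtain ⟨n, hn⟩ := Complex.exp_eq_one_iff.mp hexp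
  exact ⟨n, mul_right_cancel₀ Complex.two_pi_I_ne_zero (hn.symm.trans hgk)⟩

lemma windingNumber_eq_zero_of_hasLogOn (h : IsBigon C α β) (hF : HasLogOn F C) :
    windingNumber F α β = 0 := by
  obtain ⟨k, hk, hkF⟩ := hF
  rw [windingNumber,
    logIncrement_eq (f := F ∘ α) (hk.comp_continuous α.continuous h.left_mem)
      fun t => hkF _ (h.left_mem t),
    logIncrement_eq (f := F ∘ β) (hk.comp_continuous β.continuous h.right_mem)
      fun t => hkF _ (h.right_mem t)]
  simp

lemma windingNumber_zpow_mul_zpow (h : IsBigon C α β) (hF : ContinuousOn F C)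
    (hF0 : ∀ z ∈ C, F z ≠ 0) (hG : ContinuousOn G C) (hG0 : ∀ z ∈ C, G z ≠ 0) (m n : ℤ) :
    windingNumber (F ^ m * G ^ n) α β = m * windingNumber F α β + n * windingNumber G α β := by
  have hα : logIncrement ((F ^ m * G ^ n) ∘ α) = _ := logIncrement_zpow_mul_zpow
    (h.hasLogOn_comp_left hF hF0) (h.hasLogOn_comp_left hG hG0) m n
  have hβ : logIncrement ((F ^ m * G ^ n) ∘ β) = _ := logIncrement_zpow_mul_zpow
    (h.symm.hasLogOn_comp_left hF hF0) (h.symm.hasLogOn_comp_left hG hG0) m n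
  rw [windingNumber, windingNumber, windingNumber, hα, hβ]
  ring

lemma windingNumber_eq_of_norm_sub_lt (h : IsBigon C α β) (hF : ContinuousOn F C)
    (hG : ContinuousOn G C) (hFG : ∀ z ∈ C, ‖G z - F z‖ < ‖F z‖) :
    windingNumber G α β = windingNumber F α β := by
  have hF0 : ∀ z ∈ C, F z ≠ 0 := fun z hz =>
    norm_pos_iff.mp ((norm_nonneg _).trans_lt (hFG z hz))
  have hG0 : ∀ z ∈ C, G z ≠ 0 := fun z hz hGz => by simpa [hGz] using hFG z hz
  have hlog : HasLogOn (G ^ (1 : ℤ) * F ^ (-1 : ℤ)) C := by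
    refine hasLogOn_of_mem_slitPlane
      ((hG.zpow₀ 1 fun z hz => .inl (hG0 z hz)).mul (hF.zpow₀ (-1) fun z hz => .inl (hF0 z hz)))
      fun z hz => ?_
    have hquot : (G ^ (1 : ℤ) * F ^ (-1 : ℤ)) z = 1 + (G z - F z) / F z := by
      rw [sub_div, div_self (hF0 z hz)]
      simp [div_eq_mul_inv]
    rw [hquot]
    apply Complex.mem_slitPlane_of_norm_lt_one
    rw [norm_div, div_lt_one (norm_pos_iff.mpr (hF0 z hz))]
    exact hFG z hz
  have hzero := h.windingNumber_eq_zero_of_hasLogOn hlog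
  rw [h.windingNumber_zpow_mul_zpow hG hG0 hF hF0] at hzero
  push_cast at hzero
  linear_combination hzero

variable [T2Space X]

lemma hasLogOn_image_union_range (h : IsBigon C α β) {T : Set I} (hT : IsClosed T) {g k : I → ℂ}
    (hg : ContinuousOn g T) (hk : Continuous k) (hgF : ∀ t ∈ T, Complex.exp (g t) = F (α t))
    (hkF : ∀ t, Complex.exp (k t) = F (β t)) (h0 : 0 ∈ T → g 0 = k 0) (h1 : 1 ∈ T → g 1 = k 1) :
    HasLogOn F (α '' T ∪ range β) := by
  have hα := α.continuous.isClosedEmbedding h.injective_left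
  have hβ := β.continuous.isClosedEmbedding h.injective_right
  let H : X → ℂ := Function.extend β k (Function.extend α g 0)
  have hHβ : ∀ t, H (β t) = k t := h.injective_right.extend_apply _ _
  have hHα : EqOn (H ∘ α) g T := by
    intro t ht
    by_cases hαt : α t ∈ range β
    · rcases h.inter_subset ⟨⟨t, rfl⟩, hαt⟩ with htp | htq
      · obtain rfl : t = 0 := h.injective_left (htp.trans α.source.symm)
        rw [h0 ht, ← hHβ 0, Function.comp_apply, α.source, β.source]
      · obtain rfl : t = 1 := h.injective_left (htq.trans α.target.symm)
        rw [h1 ht, ← hHβ 1, Function.comp_apply, α.target, β.target]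
    · exact (Function.extend_apply' _ _ _ hαt).trans (h.injective_left.extend_apply _ _ t)
  refine ⟨H, ContinuousOn.union_of_isClosed ?_ ?_ (hα.isClosedMap _ hT) hβ.isClosed_range, ?_⟩
  · exact hα.isInducing.continuousOn_image_iff.mpr (hg.congr hHα)
  · rw [← image_univ, hβ.isInducing.continuousOn_image_iff]
    exact hk.continuousOn.congr fun t _ => hHβ t
  · rintro _ (⟨t, ht, rfl⟩ | ⟨t, rfl⟩)
    · exact (congrArg Complex.exp (hHα ht)).trans (hgF t ht)
    · exact (congrArg Complex.exp (hHβ t)).trans (hkF t)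

lemma hasLogOn_of_windingNumber_eq_zero (h : IsBigon C α β) (hF : ContinuousOn F C)
    (hF0 : ∀ z ∈ C, F z ≠ 0) (hw : windingNumber F α β = 0) : HasLogOn F C := by
  obtain ⟨g, k, hg, hk, hgF, hkF, h0, h1⟩ := h.exists_logs hF hF0
  rw [hw, zero_mul, sub_eq_zero] at h1
  rw [← h.union_eq, ← image_univ (f := α)]
  exact h.hasLogOn_image_union_range isClosed_univ hg.continuousOn hk (fun t _ => hgF t) hkF
    (fun _ => h0) fun _ => h1

/-- Cutting the loop at `z` leaves room to correct a logarithm by its monodromy beyond `z`. -/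
lemma hasLogOn_of_notMem (h : IsBigon C α β) (hF : ContinuousOn F C) (hF0 : ∀ z ∈ C, F z ≠ 0)
    (hK : IsClosed K) (hKC : K ⊆ C) {z : X} (hz : z ∈ range α \ {p, q}) (hzK : z ∉ K) :
    HasLogOn F K := by
  rw [← image_Ioo_eq_range_diff h.injective_left] at hz
  obtain ⟨t, ht, rfl⟩ := hz
  obtain ⟨g, k, hg, hk, hgF, hkF, h0, h1⟩ := h.exists_logs hF hF0
  obtain ⟨n, hn⟩ := h.exists_intCast_eq_windingNumber hF hF0
  have hmonodromy : Complex.exp (g 1 - k 1) = 1 := Complex.exp_eq_one_iff.mpr ⟨n, hn ▸ h1⟩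
  let g' : I → ℂ := (Iic t).piecewise g fun s => g s - (g 1 - k 1)
  have hg'_le : ∀ s ≤ t, g' s = g s := fun s hs => piecewise_eq_of_mem _ _ _ hs
  have hg'_gt : ∀ s, t < s → g' s = g s - (g 1 - k 1) := fun s hs =>
    piecewise_eq_of_notMem _ _ _ hs.not_ge
  have hg' : ContinuousOn g' (α ⁻¹' K) := by
    refine ContinuousOn.piecewise ?_ hg.continuousOn (hg.sub continuous_const).continuousOn
    rintro s ⟨hsK, hst⟩
    obtain rfl : s = t := frontier_Iic_subset t hst
    exact absurd hsK hzK
  have hg'F : ∀ s, Complex.exp (g' s) = F (α s) := by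
    intro s
    rcases le_or_gt s t with hst | hst
    · rw [hg'_le s hst, hgF]
    · rw [hg'_gt s hst, Complex.exp_sub, hmonodromy, div_one, hgF]
  have hK_subset : K ⊆ α '' (α ⁻¹' K) ∪ range β := by
    rw [image_preimage_eq_inter_range]
    exact fun w hw => (h.union_eq.ge (hKC hw)).imp_left (⟨hw, ·⟩)
  exact (h.hasLogOn_image_union_range (hK.preimage α.continuous) hg' hk (fun s _ => hg'F s) hkF
    (fun _ => (hg'_le 0 ht.1.le).trans h0)
    fun _ => (hg'_gt 1 ht.2).trans (sub_sub_cancel _ _)).mono hK_subset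

lemma hasLogOn_of_ssubset (h : IsBigon C α β) (hF : ContinuousOn F C) (hF0 : ∀ z ∈ C, F z ≠ 0)
    (hK : IsClosed K) (hKC : K ⊂ C) : HasLogOn F K := by
  obtain ⟨hKC, hCK⟩ := hKC
  have hdense : C ⊆ closure ((range α \ {p, q}) ∪ (range β \ {p, q})) := by
    rw [← h.union_eq, closure_union]
    exact union_subset_union (range_subset_closure_diff h.injective_left)
      (range_subset_closure_diff h.injective_right)
  obtain ⟨z, hzαβ, hzK⟩ : ∃ z ∈ (range α \ {p, q}) ∪ (range β \ {p, q}), z ∉ K := by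
    by_contra! hsub
    exact hCK (hdense.trans (closure_minimal hsub hK))
  rcases hzαβ with hz | hz
  · exact h.hasLogOn_of_notMem hF hF0 hK hKC hz hzK
  · exact h.symm.hasLogOn_of_notMem hF hF0 hK hKC hz hzK

end IsBigon

end Bigons

section Plane

variable {x z : ℝ × ℝ} {K U : Set (ℝ × ℝ)}

/-- The displacement from `x` to `z`, read as a complex number. The winding number of `disp x` is
the winding number about `x`. -/
noncomputable def disp (x z : ℝ × ℝ) : ℂ := Complex.equivRealProdCLM.symm (z - x)

@[fun_prop]
lemma continuous_disp (x : ℝ × ℝ) : Continuous (disp x) := by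
  unfold disp
  fun_prop

lemma continuous_disp_left (z : ℝ × ℝ) : Continuous fun x => disp x z := by
  unfold disp
  fun_prop

lemma disp_eq_zero_iff : disp x z = 0 ↔ z = x := by
  simp [disp, sub_eq_zero]

lemma disp_ne_zero_of_mem (hx : x ∉ K) (hz : z ∈ K) : disp x z ≠ 0 :=
  disp_eq_zero_iff.not.mpr (ne_of_mem_of_not_mem hz hx)

lemma disp_add_disp (x y z : ℝ × ℝ) : disp x y + disp y z = disp x z := by
  simp only [disp, ← map_add, sub_add_sub_cancel']

lemma disp_add_equivRealProdCLM (x : ℝ × ℝ) (w : ℂ) :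
    disp x (x + Complex.equivRealProdCLM w) = w := by
  simp only [disp, add_sub_cancel_left, ContinuousLinearEquiv.symm_apply_apply]

lemma isBounded_setOf_norm_disp_le (z : ℝ × ℝ) (R : ℝ) :
    Bornology.IsBounded {x | ‖disp x z‖ ≤ R} := by
  have himage : {x | ‖disp x z‖ ≤ R} ⊆
      (fun w => z - Complex.equivRealProdCLM w) '' Metric.closedBall 0 R :=
    fun x hx => ⟨disp x z, mem_closedBall_zero_iff.mpr hx,
      by simp only [disp, ContinuousLinearEquiv.apply_symm_apply, sub_sub_cancel]⟩
  exact (((isCompact_closedBall 0 R).image (by fun_prop)).isBounded).subset himage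

lemma not_hasLogOn_disp_zpow_circle (x : ℝ × ℝ) {n : ℤ} (hn : n ≠ 0) {r : ℝ} (hr : 0 < r) :
    ¬ HasLogOn (disp x ^ n) {z | ‖disp x z‖ = r} := by
  rintro ⟨k, hk, hkF⟩
  let c : ℝ → ℝ × ℝ := fun θ => x + Complex.equivRealProdCLM (circleMap 0 r θ)
  have hdisp : ∀ θ, disp x (c θ) = circleMap 0 r θ := fun θ => disp_add_equivRealProdCLM x _
  have hc : ∀ θ, ‖disp x (c θ)‖ = r := fun θ => by
    rw [hdisp, norm_circleMap_zero, abs_of_pos hr]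
  have hperiod : c (2 * Real.pi) = c 0 := by simp [c, circleMap]
  have hexp : ∀ θ : ℝ,
      Complex.exp (k (c θ)) = Complex.exp (n * (Real.log r + θ * Complex.I)) := fun θ => by
    rw [hkF _ (hc θ), Complex.exp_int_mul, Complex.exp_add, Pi.pow_apply, hdisp, circleMap_zero,
      ← Complex.ofReal_exp, Real.exp_log hr]
  have hdiff := sub_eq_sub_of_exp_eq (X := ℝ) isPreconnected_univ
    (hk.comp_continuous (by fun_prop) hc).continuousOn (by fun_prop) (fun θ _ => hexp θ)
    (mem_univ 0) (mem_univ (2 * Real.pi))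
  simp only [Function.comp_apply, hperiod] at hdiff
  have hzero : (n : ℂ) * (2 * Real.pi * Complex.I) = 0 := by
    push_cast at hdiff
    linear_combination hdiff
  simp [hn, Real.pi_ne_zero] at hzero

lemma not_hasLogOn_frontier (hU : IsOpen U) (hUb : Bornology.IsBounded U) (hx : x ∈ U) {n : ℤ}
    (hn : n ≠ 0) {G : ℝ × ℝ → ℂ} (hG : ContinuousOn G (closure U))
    (hG0 : ∀ z ∈ closure U, G z ≠ 0) : ¬ HasLogOn (disp x ^ n * G) (frontier U) := by
  intro hlog
  have hcompl : closure (closure U)ᶜ ⊆ Uᶜ :=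
    closure_minimal (compl_subset_compl.mpr subset_closure) hU.isClosed_compl
  have hdisp : ∀ z ∈ closure (closure U)ᶜ, disp x z ≠ 0 := fun z hz =>
    disp_eq_zero_iff.not.mpr fun hzx => hcompl hz (hzx ▸ hx)
  have hout : HasLogOn (disp x ^ n) (closure (closure U)ᶜ) :=
    (hlog.mono frontier_closure_subset).closure_compl isClosed_closure
      ((continuous_disp x).continuousOn.zpow₀ n fun z hz => .inl (hdisp z hz))
      (fun z hz => zpow_ne_zero n (hdisp z hz)) hG hG0
  obtain ⟨R, hR⟩ :=
    hUb.isCompact_closure.exists_bound_of_continuousOn (continuous_disp x).continuousOn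
  have hR0 : 0 ≤ R := (norm_nonneg _).trans (hR x (subset_closure hx))
  refine not_hasLogOn_disp_zpow_circle x hn (r := R + 1) (by positivity) (hout.mono ?_)
  intro z (hz : ‖disp x z‖ = R + 1)
  exact subset_closure fun hzU => by linarith [hR z hzU]

lemma not_hasLogOn_disp_frontier (hU : IsOpen U) (hUb : Bornology.IsBounded U) (hx : x ∈ U) :
    ¬ HasLogOn (disp x) (frontier U) := by
  simpa using
    not_hasLogOn_frontier hU hUb hx one_ne_zero (G := 1) continuousOn_const fun _ _ => one_ne_zero

end Plane

section Interior

lemma frontier_connectedComponentIn_compl_subset {X : Type*} [TopologicalSpace X]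
    [LocallyConnectedSpace X] {C : Set X} (hC : IsClosed C) (x : X) :
    frontier (connectedComponentIn Cᶜ x) ⊆ C := by
  intro z hz
  by_contra hzC
  have hopen : ∀ y, IsOpen (connectedComponentIn Cᶜ y) := fun y =>
    hC.isOpen_compl.connectedComponentIn
  rw [(hopen x).frontier_eq] at hz
  obtain ⟨w, hwz, hwx⟩ := mem_closure_iff.mp hz.1 _ (hopen z) (mem_connectedComponentIn hzC)
  have heq : connectedComponentIn Cᶜ x = connectedComponentIn Cᶜ z :=
    (connectedComponentIn_eq hwx).trans (connectedComponentIn_eq hwz).symm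
  exact hz.2 (heq ▸ mem_connectedComponentIn hzC)

variable {x : ℝ × ℝ} {C V : Set (ℝ × ℝ)}

lemma connectedComponentIn_subset_jordanInterior (hx : x ∈ JordanInterior C) :
    connectedComponentIn Cᶜ x ⊆ JordanInterior C := fun _ hy =>
  ⟨connectedComponentIn_subset _ _ hy, connectedComponentIn_eq hy ▸ hx.2⟩

lemma connectedComponentIn_subset_jordanExterior (hx : x ∈ JordanExterior C) :
    connectedComponentIn Cᶜ x ⊆ JordanExterior C := fun _ hy =>
  ⟨connectedComponentIn_subset _ _ hy, connectedComponentIn_eq hy ▸ hx.2⟩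

lemma isOpen_jordanInterior (hC : IsClosed C) : IsOpen (JordanInterior C) :=
  isOpen_iff_mem_nhds.mpr fun _ hx => Filter.mem_of_superset
    (hC.isOpen_compl.connectedComponentIn.mem_nhds (mem_connectedComponentIn hx.1))
    (connectedComponentIn_subset_jordanInterior hx)

lemma isOpen_jordanExterior (hC : IsClosed C) : IsOpen (JordanExterior C) :=
  isOpen_iff_mem_nhds.mpr fun _ hx => Filter.mem_of_superset
    (hC.isOpen_compl.connectedComponentIn.mem_nhds (mem_connectedComponentIn hx.1))
    (connectedComponentIn_subset_jordanExterior hx)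

lemma disjoint_jordanInterior_jordanExterior :
    Disjoint (JordanInterior C) (JordanExterior C) :=
  disjoint_left.mpr fun _ hI hE => hE.2 hI.2

lemma mem_jordanExterior (hxC : x ∉ C) (hxI : x ∉ JordanInterior C) : x ∈ JordanExterior C :=
  ⟨hxC, fun hb => hxI ⟨hxC, hb⟩⟩

lemma frontier_subset_of_jordanInterior_subset (hC : IsClosed C) (hV : JordanInterior C ⊆ V)
    (hVE : Disjoint V (JordanExterior C)) : frontier V ⊆ C := by
  rintro z ⟨hzV, hzV'⟩
  by_contra hzC
  have hzI : z ∉ JordanInterior C := fun hzI =>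
    hzV' (interior_maximal hV (isOpen_jordanInterior hC) hzI)
  exact disjoint_left.mp (hVE.closure_left (isOpen_jordanExterior hC)) hzV
    (mem_jordanExterior hzC hzI)

end Interior

namespace IsBigon

variable {p q x y : ℝ × ℝ} {C s V : Set (ℝ × ℝ)} {α β : Path p q}

lemma eventually_windingNumber_disp_eq (h : IsBigon C α β) (hx : x ∉ C) :
    ∀ᶠ y in 𝓝 x, windingNumber (disp y) α β = windingNumber (disp x) α β := by
  obtain ⟨δ, hδ, hδC⟩ := h.isCompact.exists_forall_le' (continuous_disp x).norm.continuousOn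
    fun z hz => norm_pos_iff.mpr (disp_ne_zero_of_mem hx hz)
  have hsmall : ∀ᶠ y in 𝓝 x, ‖disp y x‖ < δ :=
    (continuous_disp_left x).norm.tendsto x |>.eventually_lt_const (by simpa [disp] using hδ)
  filter_upwards [hsmall] with y hy
  refine h.windingNumber_eq_of_norm_sub_lt (continuous_disp x).continuousOn
    (continuous_disp y).continuousOn fun z hz => ?_
  rw [← disp_add_disp y x z, add_sub_cancel_right]
  exact hy.trans_le (hδC z hz)

lemma windingNumber_disp_eq_of_isPreconnected (h : IsBigon C α β) (hs : IsPreconnected s)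
    (hsC : Disjoint s C) (hx : x ∈ s) (hy : y ∈ s) :
    windingNumber (disp x) α β = windingNumber (disp y) α β := by
  refine hs.induction₂ (fun x y => windingNumber (disp x) α β = windingNumber (disp y) α β)
    (fun x hx => ?_) (fun _ _ _ _ _ _ hxy hyz => hxy.trans hyz) (fun _ _ _ _ => Eq.symm) hx hy
  have hnear := h.eventually_windingNumber_disp_eq (disjoint_left.mp hsC hx)
  filter_upwards [nhdsWithin_le_nhds hnear] with y hy using hy.symm

lemma windingNumber_disp_eq_zero_of_norm_lt (h : IsBigon C α β)
    (hx : ∀ z ∈ C, ‖disp y z‖ < ‖disp x y‖) : windingNumber (disp x) α β = 0 := by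
  have hne : disp x y ≠ 0 :=
    norm_pos_iff.mp ((norm_nonneg _).trans_lt (hx p (α.source ▸ h.left_mem 0)))
  have hw : windingNumber (disp x) α β = windingNumber (fun _ => disp x y) α β := by
    refine h.windingNumber_eq_of_norm_sub_lt continuousOn_const
      (continuous_disp x).continuousOn fun z hz => ?_
    rw [← disp_add_disp x y z, add_sub_cancel_left]
    exact hx z hz
  exact hw.trans (h.windingNumber_eq_zero_of_hasLogOn (hasLogOn_const hne))

lemma windingNumber_disp_eq_zero_of_not_isBounded (h : IsBigon C α β) (hs : IsPreconnected s)
    (hsC : Disjoint s C) (hsb : ¬ Bornology.IsBounded s) (hx : x ∈ s) :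
    windingNumber (disp x) α β = 0 := by
  obtain ⟨R, hR⟩ := h.isCompact.exists_bound_of_continuousOn (continuous_disp p).continuousOn
  obtain ⟨y, hy, hyR⟩ : ∃ y ∈ s, R < ‖disp y p‖ := by
    by_contra! hbound
    exact hsb ((isBounded_setOf_norm_disp_le p R).subset hbound)
  rw [h.windingNumber_disp_eq_of_isPreconnected hs hsC hx hy]
  exact h.windingNumber_disp_eq_zero_of_norm_lt fun z hz => (hR z hz).trans_lt hyR

lemma windingNumber_disp_eq_zero (h : IsBigon C α β) (hx : x ∈ JordanExterior C) :
    windingNumber (disp x) α β = 0 :=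
  h.windingNumber_disp_eq_zero_of_not_isBounded isPreconnected_connectedComponentIn
    (disjoint_left.mpr (connectedComponentIn_subset Cᶜ x)) hx.2 (mem_connectedComponentIn hx.1)

lemma windingNumber_disp_ne_zero (h : IsBigon C α β) (hx : x ∈ JordanInterior C) :
    windingNumber (disp x) α β ≠ 0 := fun hw =>
  have hC := h.isCompact.isClosed
  have hlog := h.hasLogOn_of_windingNumber_eq_zero (continuous_disp x).continuousOn
    (fun _ hz => disp_ne_zero_of_mem hx.1 hz) hw
  not_hasLogOn_disp_frontier hC.isOpen_compl.connectedComponentIn hx.2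
    (mem_connectedComponentIn hx.1)
    (hlog.mono (frontier_connectedComponentIn_compl_subset hC x))

/-- A product of powers of `disp x` and `disp y` with winding number zero has a logarithm on `C`,
which is impossible when `C` bounds a region containing `x` but not `y`. -/
lemma mem_connectedComponentIn_compl (h : IsBigon C α β) (hx : x ∈ JordanInterior C)
    (hy : y ∈ JordanInterior C) : y ∈ connectedComponentIn Cᶜ x := by
  by_contra hyU
  have hC := h.isCompact.isClosed
  have hU : IsOpen (connectedComponentIn Cᶜ x) := hC.isOpen_compl.connectedComponentIn
  have hUC := frontier_connectedComponentIn_compl_subset hC x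
  have hyU' : y ∉ closure (connectedComponentIn Cᶜ x) := fun hyU' =>
    hy.1 (hUC (hU.frontier_eq ▸ ⟨hyU', hyU⟩))
  have hx0 : ∀ z ∈ C, disp x z ≠ 0 := fun _ hz => disp_ne_zero_of_mem hx.1 hz
  have hy0 : ∀ z ∈ C, disp y z ≠ 0 := fun _ hz => disp_ne_zero_of_mem hy.1 hz
  have hy0' : ∀ z ∈ closure (connectedComponentIn Cᶜ x), disp y z ≠ 0 := fun _ hz =>
    disp_ne_zero_of_mem hyU' hz
  have hx_cont := (continuous_disp x).continuousOn (s := C)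
  have hy_cont := (continuous_disp y).continuousOn (s := C)
  obtain ⟨m, hm⟩ := h.exists_intCast_eq_windingNumber hx_cont hx0
  obtain ⟨n, hn⟩ := h.exists_intCast_eq_windingNumber hy_cont hy0
  have hn0 : n ≠ 0 := fun hn0 => h.windingNumber_disp_ne_zero hy (by rw [← hn, hn0, Int.cast_zero])
  have hw : windingNumber (disp x ^ n * disp y ^ (-m)) α β = 0 := by
    rw [h.windingNumber_zpow_mul_zpow hx_cont hx0 hy_cont hy0, ← hm, ← hn]
    push_cast
    ring
  have hlog : HasLogOn (disp x ^ n * disp y ^ (-m)) C := h.hasLogOn_of_windingNumber_eq_zero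
    ((hx_cont.zpow₀ n fun z hz => .inl (hx0 z hz)).mul
      (hy_cont.zpow₀ (-m) fun z hz => .inl (hy0 z hz)))
    (fun z hz => mul_ne_zero (zpow_ne_zero n (hx0 z hz)) (zpow_ne_zero (-m) (hy0 z hz))) hw
  exact not_hasLogOn_frontier hU hx.2 (mem_connectedComponentIn hx.1) hn0
    ((continuous_disp y).continuousOn.zpow₀ (-m) fun z hz => .inl (hy0' z hz))
    (fun z hz => zpow_ne_zero (-m) (hy0' z hz)) (hlog.mono hUC)

lemma jordanInterior_eq_connectedComponentIn (h : IsBigon C α β) (hx : x ∈ JordanInterior C) :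
    JordanInterior C = connectedComponentIn Cᶜ x :=
  Subset.antisymm (fun _ hy => h.mem_connectedComponentIn_compl hx hy)
    (connectedComponentIn_subset_jordanInterior hx)

lemma isConnected_jordanInterior (h : IsBigon C α β) (hne : (JordanInterior C).Nonempty) :
    IsConnected (JordanInterior C) := by
  obtain ⟨x, hx⟩ := hne
  rw [h.jordanInterior_eq_connectedComponentIn hx]
  exact isConnected_connectedComponentIn_iff.mpr hx.1

lemma isBounded_jordanInterior (h : IsBigon C α β) (hne : (JordanInterior C).Nonempty) :
    Bornology.IsBounded (JordanInterior C) := by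
  obtain ⟨x, hx⟩ := hne
  rw [h.jordanInterior_eq_connectedComponentIn hx]
  exact hx.2

lemma frontier_eq (h : IsBigon C α β) (hV : IsOpen V) (hVb : Bornology.IsBounded V) (hx : x ∈ V)
    (hxC : x ∉ C) (hVC : frontier V ⊆ C) : frontier V = C := by
  by_contra hne
  exact not_hasLogOn_disp_frontier hV hVb hx <| h.hasLogOn_of_ssubset
    (continuous_disp x).continuousOn (fun _ hz => disp_ne_zero_of_mem hxC hz) isClosed_frontier
    (hVC.ssubset_of_ne hne)

lemma frontier_jordanInterior (h : IsBigon C α β) (hne : (JordanInterior C).Nonempty) :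
    frontier (JordanInterior C) = C :=
  have hC := h.isCompact.isClosed
  h.frontier_eq (isOpen_jordanInterior hC) (h.isBounded_jordanInterior hne) hne.some_mem
    hne.some_mem.1
    (frontier_subset_of_jordanInterior_subset hC subset_rfl disjoint_jordanInterior_jordanExterior)

lemma subset_closure_jordanExterior (h : IsBigon C α β) (hne : (JordanInterior C).Nonempty) :
    C ⊆ closure (JordanExterior C) := by
  intro z hz
  by_contra hzE
  have hC := h.isCompact.isClosed
  obtain ⟨ε, hε, hball⟩ := Metric.isOpen_iff.mp isClosed_closure.isOpen_compl z hzE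
  have hVE : Disjoint (JordanInterior C ∪ Metric.ball z ε) (JordanExterior C) :=
    disjoint_jordanInterior_jordanExterior.union_left
      (disjoint_left.mpr fun _ hw hwE => hball hw (subset_closure hwE))
  have hV : IsOpen (JordanInterior C ∪ Metric.ball z ε) :=
    (isOpen_jordanInterior hC).union Metric.isOpen_ball
  have hfrontier := h.frontier_eq hV ((h.isBounded_jordanInterior hne).union Metric.isBounded_ball)
    (.inl hne.some_mem) hne.some_mem.1
    (frontier_subset_of_jordanInterior_subset hC subset_union_left hVE)
  rw [hV.frontier_eq] at hfrontier
  exact (hfrontier.ge hz).2 (.inr (Metric.mem_ball_self hε))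

lemma compl_jordanInterior_subset_closure_jordanExterior (h : IsBigon C α β)
    (hne : (JordanInterior C).Nonempty) : (JordanInterior C)ᶜ ⊆ closure (JordanExterior C) := by
  intro z hz
  by_cases hzC : z ∈ C
  · exact h.subset_closure_jordanExterior hne hzC
  · exact subset_closure (mem_jordanExterior hzC hz)

end IsBigon

section Chords

variable {p q x : ℝ × ℝ} {P : Set (ℝ × ℝ)} {α β γ : Path p q}

/-- A cross-cut of the disc bounded by `P`: a simple arc `γ` through the interior of `P` that joins
the two vertices of the presentation of `P` as `α ∪ β`. -/
structure IsChord (P : Set (ℝ × ℝ)) (α β γ : Path p q) : Prop where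
  isBigon : IsBigon P α β
  injective : Function.Injective γ
  range_diff_subset : range γ \ {p, q} ⊆ JordanInterior P

namespace IsChord

lemma symm (h : IsChord P α β γ) : IsChord P β α γ :=
  ⟨h.isBigon.symm, h.injective, h.range_diff_subset⟩

lemma isBigon_left (h : IsChord P α β γ) : IsBigon (range α ∪ range γ) α γ where
  injective_left := h.isBigon.injective_left
  injective_right := h.injective
  inter_subset := fun _ ⟨hzα, hzγ⟩ => by_contra fun hz =>
    (h.range_diff_subset ⟨hzγ, hz⟩).1 (h.isBigon.range_left_subset hzα)
  union_eq := rfl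

lemma nonempty_jordanInterior (h : IsChord P α β γ) : (JordanInterior P).Nonempty :=
  (isConnected_range_diff h.injective).nonempty.mono h.range_diff_subset

lemma disjoint_jordanExterior (h : IsChord P α β γ) :
    Disjoint (JordanExterior P) (range α ∪ range γ) := by
  rw [disjoint_right]
  rintro z (hz | hz) hzE
  · exact hzE.1 (h.isBigon.range_left_subset hz)
  · by_cases hzpq : z ∈ ({p, q} : Set (ℝ × ℝ))
    · exact hzE.1 (h.isBigon.range_left_subset (pair_subset_range α hzpq))
    · exact hzE.2 (h.range_diff_subset ⟨hz, hzpq⟩).2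

lemma windingNumber_disp_eq_zero_of_mem_jordanExterior (h : IsChord P α β γ)
    (hx : x ∈ JordanExterior P) : windingNumber (disp x) α γ = 0 :=
  h.isBigon_left.windingNumber_disp_eq_zero_of_not_isBounded isPreconnected_connectedComponentIn
    (h.disjoint_jordanExterior.mono_left (connectedComponentIn_subset_jordanExterior hx)) hx.2
    (mem_connectedComponentIn hx.1)

lemma windingNumber_disp_eq_zero (h : IsChord P α β γ) (hx : x ∉ range α ∪ range γ)
    (hxP : x ∉ JordanInterior P) : windingNumber (disp x) α γ = 0 := by
  have hclosure := h.isBigon.compl_jordanInterior_subset_closure_jordanExterior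
    h.nonempty_jordanInterior hxP
  obtain ⟨y, hyx, hyE⟩ := mem_closure_iff_nhds.mp hclosure _
    (h.isBigon_left.eventually_windingNumber_disp_eq hx)
  exact Eq.trans (Eq.symm hyx) (h.windingNumber_disp_eq_zero_of_mem_jordanExterior hyE)

lemma jordanInterior_left_subset (h : IsChord P α β γ) :
    JordanInterior (range α ∪ range γ) ⊆ JordanInterior P \ range γ := fun _ hx =>
  ⟨by_contra fun hxP => h.isBigon_left.windingNumber_disp_ne_zero hx
    (h.windingNumber_disp_eq_zero hx.1 hxP), fun hxγ => hx.1 (.inr hxγ)⟩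

lemma jordanInterior_diff_subset (h : IsChord P α β γ) : JordanInterior P \ range γ ⊆
    JordanInterior (range α ∪ range γ) ∪ JordanInterior (range β ∪ range γ) := by
  rintro x ⟨hxP, hxγ⟩
  have hx_off : x ∉ range α ∪ range γ ∧ x ∉ range β ∪ range γ :=
    ⟨fun hx => hx.elim (fun hxα => hxP.1 (h.isBigon.range_left_subset hxα)) hxγ,
      fun hx => hx.elim (fun hxβ => hxP.1 (h.isBigon.symm.range_left_subset hxβ)) hxγ⟩
  by_contra! hx
  rw [mem_union, not_or] at hx
  apply h.isBigon.windingNumber_disp_ne_zero hxP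
  rw [← windingNumber_sub_windingNumber (γ := γ),
    h.isBigon_left.windingNumber_disp_eq_zero (mem_jordanExterior hx_off.1 hx.1),
    h.symm.isBigon_left.windingNumber_disp_eq_zero (mem_jordanExterior hx_off.2 hx.2), sub_zero]

lemma jordanInterior_diff_eq (h : IsChord P α β γ) : JordanInterior P \ range γ =
    JordanInterior (range α ∪ range γ) ∪ JordanInterior (range β ∪ range γ) :=
  h.jordanInterior_diff_subset.antisymm
    (union_subset h.jordanInterior_left_subset h.symm.jordanInterior_left_subset)

lemma notMem_of_mem_range_left (h : IsChord P α β γ) (hx : x ∈ range α \ {p, q}) :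
    x ∉ range β ∪ range γ := fun hxβγ =>
  hxβγ.elim (disjoint_left.mp h.isBigon.disjoint_diff hx)
    (disjoint_left.mp h.isBigon_left.disjoint_diff hx)

/-- Just inside `P` next to an inner point of `α` the loop `β ∪ γ` has winding number zero, and
therefore `α ∪ γ` does not. -/
lemma nonempty_jordanInterior_left (h : IsChord P α β γ) :
    (JordanInterior (range α ∪ range γ)).Nonempty := by
  obtain ⟨a, ha⟩ := (isConnected_range_diff h.isBigon.injective_left).nonempty
  have haβγ := h.notMem_of_mem_range_left ha
  have haP : a ∈ P := h.isBigon.range_left_subset ha.1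
  have hwa : windingNumber (disp a) β γ = 0 :=
    h.symm.windingNumber_disp_eq_zero haβγ fun haI => haI.1 haP
  have ha_closure : a ∈ closure (JordanInterior P) := frontier_subset_closure <|
    (h.isBigon.frontier_jordanInterior h.nonempty_jordanInterior).ge haP
  obtain ⟨y, ⟨hwy, hyβγ⟩, hyP⟩ := mem_closure_iff_nhds.mp ha_closure _
    (Filter.inter_mem (h.symm.isBigon_left.eventually_windingNumber_disp_eq haβγ)
      (h.symm.isBigon_left.isCompact.isClosed.isOpen_compl.mem_nhds haβγ))
  have hyγ : y ∉ range γ := fun hyγ => hyβγ (.inr hyγ)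
  refine ⟨y, (h.jordanInterior_diff_subset ⟨hyP, hyγ⟩).resolve_right fun hy => ?_⟩
  exact h.symm.isBigon_left.windingNumber_disp_ne_zero hy (Eq.trans hwy hwa)

lemma jordanInterior_left_subset_of_mem (h : IsChord P α β γ)
    (hxα : x ∈ JordanInterior (range α ∪ range γ)) (hxβ : x ∈ JordanInterior (range β ∪ range γ)) :
    JordanInterior (range α ∪ range γ) ⊆ JordanInterior (range β ∪ range γ) := by
  have hoff : JordanInterior (range α ∪ range γ) ⊆ (range β ∪ range γ)ᶜ := fun z hz hzβγ =>
    hzβγ.elim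
      (fun hzβ => (h.jordanInterior_left_subset hz).1.1 (h.isBigon.symm.range_left_subset hzβ))
      (h.jordanInterior_left_subset hz).2
  exact ((h.isBigon_left.isConnected_jordanInterior ⟨x, hxα⟩).isPreconnected
    |>.subset_connectedComponentIn hxα hoff).trans (connectedComponentIn_subset_jordanInterior hxβ)

lemma disjoint_jordanInterior (h : IsChord P α β γ) :
    Disjoint (JordanInterior (range α ∪ range γ)) (JordanInterior (range β ∪ range γ)) := by
  rw [disjoint_left]
  intro x hxα hxβ
  have hinterior := (h.jordanInterior_left_subset_of_mem hxα hxβ).antisymm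
    (h.symm.jordanInterior_left_subset_of_mem hxβ hxα)
  have hcurve : range α ∪ range γ = range β ∪ range γ := by
    rw [← h.isBigon_left.frontier_jordanInterior ⟨x, hxα⟩, hinterior,
      h.symm.isBigon_left.frontier_jordanInterior ⟨x, hxβ⟩]
  obtain ⟨a, ha⟩ := (isConnected_range_diff h.isBigon.injective_left).nonempty
  exact h.notMem_of_mem_range_left ha (hcurve ▸ .inl ha.1)

lemma isConnected_jordanInterior_left (h : IsChord P α β γ) :
    IsConnected (JordanInterior (range α ∪ range γ)) :=
  h.isBigon_left.isConnected_jordanInterior h.nonempty_jordanInterior_left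

lemma separatedNhds_jordanInterior (h : IsChord P α β γ) :
    SeparatedNhds (JordanInterior (range α ∪ range γ)) (JordanInterior (range β ∪ range γ)) :=
  ⟨_, _, isOpen_jordanInterior h.isBigon_left.isCompact.isClosed,
    isOpen_jordanInterior h.symm.isBigon_left.isCompact.isClosed, subset_rfl, subset_rfl,
    h.disjoint_jordanInterior⟩

lemma frontier_jordanInterior_left (h : IsChord P α β γ) :
    frontier (JordanInterior (range α ∪ range γ)) = (range α \ {p, q}) ∪ range γ := by
  rw [h.isBigon_left.frontier_jordanInterior h.nonempty_jordanInterior_left]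
  have hpq := pair_subset_range γ
  grind

end IsChord

end Chords

section Components

variable {X : Type*} [TopologicalSpace X] {x : X} {s t : Set X}

lemma connectedComponentIn_union_eq_left (hs : IsPreconnected s) (hst : SeparatedNhds s t)
    (hx : x ∈ s) : connectedComponentIn (s ∪ t) x = s := by
  refine Subset.antisymm ?_ (hs.subset_connectedComponentIn hx subset_union_left)
  have hsub := connectedComponentIn_subset (s ∪ t) x
  obtain ⟨u, v, hu, hv, hsu, htv, huv⟩ := hst
  have hcomp : connectedComponentIn (s ∪ t) x ⊆ u :=
    isPreconnected_connectedComponentIn.subset_left_of_subset_union hu hv huv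
      (hsub.trans (union_subset_union hsu htv)) ⟨x, mem_connectedComponentIn (.inl hx), hsu hx⟩
  exact fun y hy =>
    (hsub hy).resolve_right fun hyt => disjoint_left.mp huv (hcomp hy) (htv hyt)

lemma connectedComponentIn_union_eq_or_eq (hs : IsPreconnected s) (ht : IsPreconnected t)
    (hst : SeparatedNhds s t) (hx : x ∈ s ∪ t) :
    connectedComponentIn (s ∪ t) x = s ∨ connectedComponentIn (s ∪ t) x = t := by
  rcases hx with hx | hx
  · exact .inl (connectedComponentIn_union_eq_left hs hst hx)
  · exact .inr (union_comm s t ▸ connectedComponentIn_union_eq_left ht hst.symm hx)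

namespace IsBigon

variable {p q : X} {C : Set X} {α β : Path p q}

lemma diff_eq_union (h : IsBigon C α β) :
    C \ {p, q} = (range α \ {p, q}) ∪ (range β \ {p, q}) := by
  rw [← h.union_eq, union_sdiff_distrib]

lemma separatedNhds_diff [T2Space X] [CompletelyNormalSpace X] (h : IsBigon C α β) :
    SeparatedNhds (range α \ {p, q}) (range β \ {p, q}) := by
  have hclosure : ∀ γ : Path p q, closure (range γ \ {p, q}) ⊆ range γ := fun γ =>
    closure_minimal sdiff_subset (isCompact_range γ.continuous).isClosed
  rw [separatedNhds_iff_disjoint]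
  exact CompletelyNormalSpace.completely_normal
    (h.symm.disjoint_diff.symm.mono_left (hclosure α)) (h.disjoint_diff.mono_right (hclosure β))

end IsBigon

end Components

section Circle

variable {c : ℝ} {u v : AddCircle (1 : ℝ)}

/-- The path on the circle of length `1` that starts at `u` and covers the signed length `c` at
constant speed. -/
noncomputable def circleArc (u : AddCircle (1 : ℝ)) (c : ℝ) : Path u (u + (c : AddCircle (1 : ℝ)))
    where
  toFun t := u + ((c * t : ℝ) : AddCircle (1 : ℝ))
  continuous_toFun := by fun_prop
  source' := by simp
  target' := by simp

lemma circleArc_apply (u : AddCircle (1 : ℝ)) (c : ℝ) (t : I) :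
    circleArc u c t = u + ((c * t : ℝ) : AddCircle (1 : ℝ)) := rfl

lemma exists_intCast_eq_sub_of_coe_eq {a b : ℝ} (h : (a : AddCircle (1 : ℝ)) = b) :
    ∃ n : ℤ, (n : ℝ) = a - b := by
  rw [← sub_eq_zero, ← AddCircle.coe_sub, AddCircle.coe_eq_zero_iff] at h
  simpa using h

lemma circleArc_injective (hc0 : c ≠ 0) (hc1 : |c| < 1) : Function.Injective (circleArc u c) := by
  intro s t hst
  obtain ⟨n, hn⟩ := exists_intCast_eq_sub_of_coe_eq (add_left_cancel hst)
  have hle : |(s : ℝ) - t| ≤ 1 :=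
    abs_le.mpr ⟨by linarith [s.2.1, t.2.2], by linarith [s.2.2, t.2.1]⟩
  have hn1 : |(n : ℝ)| < 1 := by
    rw [hn, ← mul_sub, abs_mul]
    exact (mul_le_of_le_one_right (abs_nonneg c) hle).trans_lt hc1
  obtain rfl : n = 0 := Int.abs_lt_one_iff.mp (by exact_mod_cast hn1)
  rw [Int.cast_zero, eq_comm, sub_eq_zero] at hn
  exact Subtype.ext (mul_left_cancel₀ hc0 hn)

lemma mem_pair_of_circleArc_eq (hc : c ∈ Ioo 0 1) {s t : I}
    (hst : circleArc u c s = circleArc u (c - 1) t) :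
    circleArc u c s ∈ ({u, u + (c : AddCircle (1 : ℝ))} : Set (AddCircle (1 : ℝ))) := by
  obtain ⟨n, hn⟩ := exists_intCast_eq_sub_of_coe_eq (add_left_cancel hst)
  have hc' : 0 < 1 - c := sub_pos.mpr hc.2
  have hn_nonneg : (0 : ℝ) ≤ n := by linarith [mul_nonneg hc.1.le s.2.1, mul_nonneg hc'.le t.2.1]
  have hs1 : 0 ≤ c * (1 - s) := mul_nonneg hc.1.le (sub_nonneg.mpr s.2.2)
  have ht1 : 0 ≤ (1 - c) * (1 - t) := mul_nonneg hc'.le (sub_nonneg.mpr t.2.2)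
  have hn_le : (n : ℝ) ≤ 1 := by linarith
  obtain rfl | rfl : n = 0 ∨ n = 1 := by
    have : 0 ≤ n := by exact_mod_cast hn_nonneg
    have : n ≤ 1 := by exact_mod_cast hn_le
    lia
  · have hs : c * s = 0 := by
      push_cast at hn
      linarith [mul_nonneg hc.1.le s.2.1, mul_nonneg hc'.le t.2.1]
    obtain rfl : s = 0 := Subtype.ext ((mul_eq_zero.mp hs).resolve_left hc.1.ne')
    exact .inl (circleArc u c).source
  · have hs : c * (1 - s) = 0 := by
      push_cast at hn
      linarith
    obtain rfl : s = 1 :=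
      Subtype.ext (sub_eq_zero.mp ((mul_eq_zero.mp hs).resolve_left hc.1.ne')).symm
    exact .inr (circleArc u c).target

lemma exists_mem_Ico_eq_add (u v : AddCircle (1 : ℝ)) :
    ∃ s ∈ Ico (0 : ℝ) 1, v = u + (s : AddCircle (1 : ℝ)) := by
  obtain ⟨s, hs, hsv⟩ := (AddCircle.coe_image_Ico_eq (1 : ℝ) 0).ge (mem_univ (v - u))
  exact ⟨s, by simpa using hs, by rw [hsv, add_sub_cancel]⟩

lemma range_circleArc_union (hc : c ∈ Ioo 0 1) :
    range (circleArc u c) ∪ range (circleArc u (c - 1)) = univ := by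
  refine eq_univ_of_forall fun w => ?_
  obtain ⟨s, hs, rfl⟩ := exists_mem_Ico_eq_add u w
  rcases le_total s c with hsc | hcs
  · refine .inl ⟨⟨s / c, div_nonneg hs.1 hc.1.le, (div_le_one hc.1).mpr hsc⟩, ?_⟩
    rw [circleArc_apply, mul_div_cancel₀ _ hc.1.ne']
  · have hc' : 0 < 1 - c := sub_pos.mpr hc.2
    refine .inr ⟨⟨(1 - s) / (1 - c), div_nonneg (sub_nonneg.mpr hs.2.le) hc'.le,
      (div_le_one hc').mpr (by linarith)⟩, ?_⟩
    have hlift : (c - 1) * ((1 - s) / (1 - c)) = s - 1 := by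
      field_simp
      ring
    rw [circleArc_apply, hlift, AddCircle.coe_sub, AddCircle.coe_period, sub_zero]

lemma exists_isBigon_univ (huv : u ≠ v) : ∃ α β : Path u v, IsBigon univ α β := by
  obtain ⟨c, hc, rfl⟩ := exists_mem_Ico_eq_add u v
  have hc0 : c ≠ 0 := by
    rintro rfl
    simp at huv
  have hcIoo : c ∈ Ioo 0 1 := ⟨hc.1.lt_of_ne' hc0, hc.2⟩
  have htarget : u + (c : AddCircle (1 : ℝ)) = u + ((c - 1 : ℝ) : AddCircle (1 : ℝ)) := by
    rw [AddCircle.coe_sub, AddCircle.coe_period, sub_zero]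
  refine ⟨circleArc u c, (circleArc u (c - 1)).cast rfl htarget, ?_, ?_, ?_, ?_⟩
  · exact circleArc_injective hc0 (abs_lt.mpr ⟨by linarith [hcIoo.1], hc.2⟩)
  · exact circleArc_injective (by linarith [hc.2])
      (abs_lt.mpr ⟨by linarith [hcIoo.1], by linarith [hc.2]⟩)
  · rintro _ ⟨⟨s, rfl⟩, t, hst⟩
    exact mem_pair_of_circleArc_eq hcIoo hst.symm
  · exact range_circleArc_union hcIoo

end Circle

section Curves

variable {p q : ℝ × ℝ} {P S : Set (ℝ × ℝ)}

lemma exists_isBigon (hP : IsSimpleClosedCurve P) (hp : p ∈ P) (hq : q ∈ P) (hpq : p ≠ q) :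
    ∃ α β : Path p q, IsBigon P α β := by
  obtain ⟨f, hf, hfi, rfl⟩ := hP
  obtain ⟨u, rfl⟩ := hp
  obtain ⟨v, rfl⟩ := hq
  obtain ⟨α, β, h⟩ := exists_isBigon_univ (ne_of_apply_ne f hpq)
  exact ⟨α.map hf, β.map hf, image_univ (f := f) ▸ h.map hf hfi⟩

lemma exists_path_of_isArc (hS : IsArc S p q) :
    ∃ γ : Path p q, Function.Injective γ ∧ range γ = S := by
  obtain ⟨f, hf, hfi, rfl, rfl, rfl⟩ := hS
  exact ⟨⟨⟨_, continuousOn_iff_continuous_domRestrict.mp hf⟩, by simp, by simp⟩,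
    hfi.injective, range_domRestrict _ _⟩

end Curves

end JordanArc

/-- Jordan arc separation in a disc: if `S` is a simple arc with endpoints `p, q` on a
simple closed curve `P` and interior in the interior of `P`, then `P \ {p, q}` splits
into two arcs `A₁, A₂` (its two connected components), and `int P \ S` consists of
exactly two connected components `T₁, T₂`, bounded by `A₁ ∪ S` and `A₂ ∪ S`. -/
theorem jordan_arc_separation (P S : Set (ℝ × ℝ)) (p q : ℝ × ℝ)
    (hP : IsSimpleClosedCurve P) (hS : IsArc S p q) (hpq : p ≠ q)
    (hpP : p ∈ P) (hqP : q ∈ P) (hSP : S ∩ P = {p, q})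
    (hSint : S \ {p, q} ⊆ JordanInterior P) :
    ∃ A₁ A₂ : Set (ℝ × ℝ), A₁ ≠ A₂ ∧ IsConnected A₁ ∧ IsConnected A₂ ∧
      Disjoint A₁ A₂ ∧ P \ {p, q} = A₁ ∪ A₂ ∧
      (∀ y ∈ P \ ({p, q} : Set (ℝ × ℝ)),
        connectedComponentIn (P \ {p, q}) y = A₁ ∨
        connectedComponentIn (P \ {p, q}) y = A₂) ∧
      ∃ T₁ T₂ : Set (ℝ × ℝ), T₁ ≠ T₂ ∧ IsConnected T₁ ∧ IsConnected T₂ ∧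
        Disjoint T₁ T₂ ∧ JordanInterior P \ S = T₁ ∪ T₂ ∧
        (∀ y ∈ JordanInterior P \ S,
          connectedComponentIn (JordanInterior P \ S) y = T₁ ∨
          connectedComponentIn (JordanInterior P \ S) y = T₂) ∧
        frontier T₁ = A₁ ∪ S ∧ frontier T₂ = A₂ ∪ S := by
  obtain ⟨α, β, h⟩ := JordanArc.exists_isBigon hP hpP hqP hpq
  obtain ⟨γ, hγ, rfl⟩ := JordanArc.exists_path_of_isArc hS
  have hc : JordanArc.IsChord P α β γ := ⟨h, hγ, hSint⟩
  have hA₁ := JordanArc.isConnected_range_diff h.injective_left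
  have hA₂ := JordanArc.isConnected_range_diff h.injective_right
  have hA := h.separatedNhds_diff
  have hT₁ := hc.isConnected_jordanInterior_left
  have hT₂ := hc.symm.isConnected_jordanInterior_left
  have hT := hc.separatedNhds_jordanInterior
  refine ⟨_, _, hA.disjoint.ne hA₁.nonempty.ne_empty, hA₁, hA₂, hA.disjoint, h.diff_eq_union,
    fun y hy => ?_, _, _, hT.disjoint.ne hT₁.nonempty.ne_empty, hT₁, hT₂, hT.disjoint,
    hc.jordanInterior_diff_eq, fun y hy => ?_, hc.frontier_jordanInterior_left,
    hc.symm.frontier_jordanInterior_left⟩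
  · rw [h.diff_eq_union] at hy ⊢
    exact JordanArc.connectedComponentIn_union_eq_or_eq hA₁.isPreconnected hA₂.isPreconnected hA hy
  · rw [hc.jordanInterior_diff_eq] at hy ⊢
    exact JordanArc.connectedComponentIn_union_eq_or_eq hT₁.isPreconnected hT₂.isPreconnected hT hy
end

section
/- Interleaved interior chords must cross: if s, u, t, v are four distinct points in cyclic order on a simple closed curve P, and α is a simple arc from s to t, β a simple arc from u to v, both with interiors contained in int P, then α and β intersect. -/
/-- Four distinct points `s, u, t, v` on a simple closed curve `P` are interleaved
(occur in this cyclic order) when `u` and `v` lie on different arcs of `P` determined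
by `s` and `t`. -/
def Interleaved (P : Set (ℝ × ℝ)) (s u t v : ℝ × ℝ) : Prop :=
  s ∈ P ∧ u ∈ P ∧ t ∈ P ∧ v ∈ P ∧
    [s, u, t, v].Nodup ∧
    connectedComponentIn (P \ {s, t}) u ≠ connectedComponentIn (P \ {s, t}) v

/-!
By Eilenberg's criterion, points `p` and `q` of the plane lie in the same component of the
complement of a compact set `K` iff `(z - p) / (z - q)` has a continuous logarithm on `K`.
Logarithms on two compact sets with connected intersection differ there by a constant, hence glue;
this is Janiszewski's theorem: if neither `K₁` nor `K₂` separates two points and `K₁ ∩ K₂` is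
connected, then `K₁ ∪ K₂` does not separate them. An arc carries a logarithm of every nowhere
vanishing continuous function, so it does not separate the plane; hence `P`, as soon as it has an
interior point, lies in the closure of its exterior.

Suppose `α` misses `β`, and let `A₁ ∋ u` and `A₂ ∋ v` be the two arcs of `P` from `s` to `t`.
Passing through `v`, the interior of `β` can be joined to the exterior without meeting `A₁ ∪ α`,
and passing through `u`, without meeting `A₂ ∪ α`. As `(A₁ ∪ α) ∩ (A₂ ∪ α) = α` is connected,
`P ∪ α` does not separate the interior of `β` from the exterior, which is absurd.
-/

open Set Topology Metric Bornology

section ConnectedComponents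

variable {X : Type*} [TopologicalSpace X]

lemma mem_connectedComponentIn_of_mem_closure {S B E : Set X} (hB : IsPreconnected B)
    (hE : IsPreconnected E) (hBS : B ⊆ S) (hES : E ⊆ S) {x : X} (hxS : x ∈ S)
    (hxB : x ∈ closure B) (hxE : x ∈ closure E) {b e : X} (hb : b ∈ B) (he : e ∈ E) :
    e ∈ connectedComponentIn S b := by
  have insert_closure {C : Set X} (hC : IsPreconnected C) (hx : x ∈ closure C) :
      IsPreconnected (insert x C) :=
    hC.subset_closure (subset_insert x C) (insert_subset hx subset_closure)
  have hBE : IsPreconnected (insert x B ∪ insert x E) :=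
    (insert_closure hB hxB).union x (mem_insert x B) (mem_insert x E) (insert_closure hE hxE)
  exact hBE.subset_connectedComponentIn (.inl (.inr hb))
    (union_subset (insert_subset hxS hBS) (insert_subset hxS hES)) (.inr (.inr he))

variable [LocallyConnectedSpace X]

lemma closure_connectedComponentIn_inter_subset {U : Set X} (hU : IsOpen U) (x : X) :
    closure (connectedComponentIn U x) ∩ U ⊆ connectedComponentIn U x := by
  rintro a ⟨ha, haU⟩
  obtain ⟨b, hba, hbx⟩ :=
    mem_closure_iff.1 ha _ hU.connectedComponentIn (mem_connectedComponentIn haU)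
  rw [connectedComponentIn_eq hbx, ← connectedComponentIn_eq hba]
  exact mem_connectedComponentIn haU

lemma frontier_connectedComponentIn_subset_compl {U : Set X} (hU : IsOpen U) (x : X) :
    frontier (connectedComponentIn U x) ⊆ Uᶜ := by
  rw [hU.connectedComponentIn.frontier_eq]
  exact fun a ha haU ↦ ha.2 (closure_connectedComponentIn_inter_subset hU x ⟨ha.1, haU⟩)

lemma frontier_connectedComponentIn_compl_eq {P : Set X} (hP : IsClosed P)
    (harc : ∀ x ∈ P, ∀ U ∈ 𝓝 x, ∃ A ⊆ P, P \ U ⊆ A ∧ IsPreconnected Aᶜ)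
    (hsep : ¬ IsPreconnected Pᶜ) {e : X} (he : e ∉ P) :
    frontier (connectedComponentIn Pᶜ e) = P := by
  set E := connectedComponentIn Pᶜ e with hE
  have hEo : IsOpen E := hP.isOpen_compl.connectedComponentIn
  have hEP : E ⊆ Pᶜ := connectedComponentIn_subset _ _
  refine Subset.antisymm ?_ fun x hx ↦ hEo.frontier_eq ▸ ⟨?_, fun hxE ↦ hEP hxE hx⟩
  · simpa using frontier_connectedComponentIn_subset_compl hP.isOpen_compl e
  by_contra hxE
  obtain ⟨A, hAP, hPA, hA⟩ := harc x hx _ (isClosed_closure.isOpen_compl.mem_nhds hxE)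
  have hclosure : closure E ∩ Aᶜ ⊆ E := fun y ⟨hyE, hyA⟩ ↦
    closure_connectedComponentIn_inter_subset hP.isOpen_compl e
      ⟨hyE, fun hyP ↦ hyA (hPA ⟨hyP, not_not_intro hyE⟩)⟩
  have hAE : Aᶜ ⊆ E := hA.subset_of_closure_inter_subset hEo
    ⟨e, fun h ↦ he (hAP h), mem_connectedComponentIn he⟩ hclosure
  have hPE : Pᶜ = E := ((compl_subset_compl.2 hAP).trans hAE).antisymm hEP
  exact hsep (hPE ▸ hE ▸ isPreconnected_connectedComponentIn)

lemma exists_isClosed_cover_of_connectedComponentIn_ne {K : Set X} (hK : IsClosed K) {u v : X}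
    (hu : u ∉ K) (hv : v ∉ K) (huv : connectedComponentIn Kᶜ u ≠ connectedComponentIn Kᶜ v) :
    ∃ A₁ A₂ : Set X, IsClosed A₁ ∧ IsClosed A₂ ∧ A₁ ∪ A₂ = univ ∧ A₁ ∩ A₂ ⊆ K ∧
      u ∉ A₂ ∧ v ∉ A₁ := by
  let C := connectedComponentIn Kᶜ u
  have hC : IsOpen C := hK.isOpen_compl.connectedComponentIn
  have hCK : closure C ⊆ C ∪ K := fun x hx ↦ or_iff_not_imp_right.2 fun hxK ↦
    closure_connectedComponentIn_inter_subset hK.isOpen_compl u ⟨hx, hxK⟩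
  refine ⟨closure C, Cᶜ, isClosed_closure, hC.isClosed_compl, ?_, ?_, ?_, ?_⟩
  · exact eq_univ_of_subset (union_subset_union_left _ subset_closure) (union_compl_self C)
  · exact fun x ⟨hx, hxC⟩ ↦ (hCK hx).resolve_left hxC
  · exact not_not_intro (mem_connectedComponentIn hu)
  · exact fun hvC ↦ (hCK hvC).elim (fun h ↦ huv (connectedComponentIn_eq h)) hv

end ConnectedComponents

section ComplementOfBounded

variable {E : Type*} [NormedAddCommGroup E] [NormedSpace ℝ E]

lemma isPreconnected_compl_closedBall (hE : 1 < Module.rank ℝ E) {R : ℝ} (hR : 0 ≤ R) :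
    IsPreconnected (closedBall (0 : E) R)ᶜ := by
  have hpolar : (closedBall (0 : E) R)ᶜ = (fun q : ℝ × E ↦ q.1 • q.2) '' Ioi R ×ˢ sphere 0 1 := by
    ext z
    simp only [mem_compl_iff, mem_closedBall_zero_iff, not_le, mem_image, mem_prod, mem_Ioi,
      mem_sphere_zero_iff_norm, Prod.exists]
    constructor
    · intro hz
      have hz0 : ‖z‖ ≠ 0 := (hR.trans_lt hz).ne'
      exact ⟨‖z‖, ‖z‖⁻¹ • z, ⟨hz, by rw [norm_smul, norm_inv, norm_norm, inv_mul_cancel₀ hz0]⟩,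
        smul_inv_smul₀ hz0 z⟩
    · rintro ⟨r, y, ⟨hr, hy⟩, rfl⟩
      rwa [norm_smul, hy, mul_one, Real.norm_of_nonneg (hR.trans hr.le)]
  rw [hpolar]
  exact (isPreconnected_Ioi.prod (isPreconnected_sphere hE 0 1)).image _ (by fun_prop)

lemma exists_isPreconnected_subset_compl_isBounded_compl (hE : 1 < Module.rank ℝ E) {K : Set E}
    (hK : IsBounded K) : ∃ T ⊆ Kᶜ, IsPreconnected T ∧ IsBounded Tᶜ := by
  obtain ⟨R, hR⟩ := hK.subset_closedBall 0
  refine ⟨(closedBall 0 (max R 0))ᶜ, ?_, isPreconnected_compl_closedBall hE (le_max_right R 0), ?_⟩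
  · exact compl_subset_compl.2 (hR.trans (closedBall_subset_closedBall (le_max_left R 0)))
  · rw [compl_compl]
    exact isBounded_closedBall

lemma exists_not_isBounded_connectedComponentIn_compl (hE : 1 < Module.rank ℝ E) {K : Set E}
    (hK : IsBounded K) : ∃ e ∉ K, ¬ IsBounded (connectedComponentIn Kᶜ e) := by
  have : Nontrivial E := rank_pos_iff_nontrivial.1 (zero_lt_one.trans hE)
  obtain ⟨T, hTK, hT, hTb⟩ := exists_isPreconnected_subset_compl_isBounded_compl hE hK
  have hT_unbounded : ¬ IsBounded T := fun h ↦
    NormedSpace.unbounded_univ ℝ E (union_compl_self T ▸ h.union hTb)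
  obtain ⟨e, he⟩ : T.Nonempty := nonempty_of_not_isBounded hT_unbounded
  exact ⟨e, hTK he, fun h ↦ hT_unbounded (h.subset (hT.subset_connectedComponentIn he hTK))⟩

lemma mem_connectedComponentIn_compl_of_not_isBounded (hE : 1 < Module.rank ℝ E) {K : Set E}
    (hK : IsBounded K) {p q : E} (hp : ¬ IsBounded (connectedComponentIn Kᶜ p))
    (hq : ¬ IsBounded (connectedComponentIn Kᶜ q)) : q ∈ connectedComponentIn Kᶜ p := by
  obtain ⟨T, hTK, hT, hTb⟩ := exists_isPreconnected_subset_compl_isBounded_compl hE hK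
  have meets_T {x : E} (hx : ¬ IsBounded (connectedComponentIn Kᶜ x)) :
      ∃ a ∈ T, a ∈ connectedComponentIn Kᶜ x := by
    by_contra! h
    exact hx (hTb.subset fun a hax haT ↦ h a haT hax)
  obtain ⟨a, haT, hap⟩ := meets_T hp
  obtain ⟨b, hbT, hbq⟩ := meets_T hq
  rw [connectedComponentIn_eq hap,
    connectedComponentIn_eq (hT.subset_connectedComponentIn haT hTK hbT),
    ← connectedComponentIn_eq hbq]
  exact mem_connectedComponentIn (connectedComponentIn_nonempty_iff.1 ⟨b, hbq⟩)

end ComplementOfBounded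

/-- The function `f` has a continuous logarithm on `K`; applied to a ratio `(z - p) / (z - q)`, this
detects whether `K` separates `p` from `q`. Only the values of the witness on `K` are constrained.
-/
def HasLogOn {X : Type*} [TopologicalSpace X] (f : X → ℂ) (K : Set X) : Prop :=
  ∃ φ : X → ℂ, ContinuousOn φ K ∧ ∀ x ∈ K, Complex.exp (φ x) = f x

section HasLogOn

variable {X Y : Type*} [TopologicalSpace X] [TopologicalSpace Y] {f g : X → ℂ} {K L : Set X}

lemma HasLogOn.ne_zero (h : HasLogOn f K) {x : X} (hx : x ∈ K) : f x ≠ 0 := by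
  obtain ⟨φ, -, hφ⟩ := h
  exact hφ x hx ▸ Complex.exp_ne_zero _

lemma HasLogOn.congr (hf : HasLogOn f K) (hfg : EqOn f g K) : HasLogOn g K := by
  obtain ⟨φ, hφ, hφf⟩ := hf
  exact ⟨φ, hφ, fun x hx ↦ (hφf x hx).trans (hfg hx)⟩

lemma HasLogOn.comp (hf : HasLogOn f K) {h : Y → X} {S : Set Y} (hh : ContinuousOn h S)
    (hSK : MapsTo h S K) : HasLogOn (f ∘ h) S := by
  obtain ⟨φ, hφ, hφf⟩ := hf
  exact ⟨φ ∘ h, hφ.comp hh hSK, fun y hy ↦ hφf (h y) (hSK hy)⟩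

lemma HasLogOn.mono (hf : HasLogOn f K) (hLK : L ⊆ K) : HasLogOn f L :=
  hf.comp continuousOn_id hLK

lemma HasLogOn.inv (hf : HasLogOn f K) : HasLogOn f⁻¹ K := by
  obtain ⟨φ, hφ, hφf⟩ := hf
  exact ⟨-φ, hφ.neg, fun x hx ↦ by simp [Complex.exp_neg, hφf x hx]⟩

lemma HasLogOn.mul (hf : HasLogOn f K) (hg : HasLogOn g K) : HasLogOn (f * g) K := by
  obtain ⟨φ, hφ, hφf⟩ := hf
  obtain ⟨ψ, hψ, hψg⟩ := hg
  exact ⟨φ + ψ, hφ.add hψ, fun x hx ↦ by simp [Complex.exp_add, hφf x hx, hψg x hx]⟩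

lemma hasLogOn_of_mem_slitPlane (hf : ContinuousOn f K) (h : ∀ x ∈ K, f x ∈ Complex.slitPlane) :
    HasLogOn f K :=
  ⟨fun x ↦ Complex.log (f x), hf.clog h,
    fun x hx ↦ Complex.exp_log (Complex.slitPlane_ne_zero (h x hx))⟩

lemma hasLogOn_univ [SimplyConnectedSpace X] [LocallyPathConnectedSpace X] (hf : Continuous f)
    (h0 : ∀ x, f x ≠ 0) : HasLogOn f univ := by
  obtain ⟨x₀⟩ : Nonempty X := inferInstance
  obtain ⟨φ, ⟨-, hφ⟩, -⟩ := Complex.isCoveringMapOn_exp.existsUnique_continuousMap_lifts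
    (⟨f, hf⟩ : C(X, ℂ)) (Complex.exp_log (h0 x₀)) h0
  exact ⟨φ, φ.continuous.continuousOn, fun x _ ↦ congrFun hφ x⟩

lemma hasLogOn_univ_of_Icc {a b : ℝ} (hab : a ≤ b) {f : Icc a b → ℂ} (hf : Continuous f)
    (h0 : ∀ x, f x ≠ 0) : HasLogOn f univ := by
  have hlog : HasLogOn (IccExtend hab f) univ := hasLogOn_univ hf.Icc_extend' fun _ ↦ h0 _
  refine (hlog.comp continuous_subtype_val.continuousOn (mapsTo_univ _ _)).congr fun x _ ↦ ?_
  exact IccExtend_val hab f x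

lemma hasLogOn_range_of_isEmbedding {h : Y → X} (hh : IsEmbedding h)
    (hf : HasLogOn (f ∘ h) univ) : HasLogOn f (range h) := by
  obtain ⟨φ, hφ, hφf⟩ := hf
  have hext : Function.extend h φ 0 ∘ h = φ := funext (hh.injective.extend_apply φ 0)
  refine ⟨Function.extend h φ 0, ?_, ?_⟩
  · rintro _ ⟨y, rfl⟩
    rw [ContinuousWithinAt, ← hh.map_nhds_eq, Filter.tendsto_map'_iff, hext,
      hh.injective.extend_apply]
    exact (continuousOn_univ.1 hφ).continuousAt
  · rintro _ ⟨y, rfl⟩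
    rw [hh.injective.extend_apply]
    exact hφf y (mem_univ y)

lemma exists_exp_eq_one_forall_eq_add (hK : IsPreconnected K) {φ ψ : X → ℂ}
    (hφ : ContinuousOn φ K) (hψ : ContinuousOn ψ K)
    (hexp : ∀ x ∈ K, Complex.exp (φ x) = Complex.exp (ψ x)) :
    ∃ c : ℂ, Complex.exp c = 1 ∧ ∀ x ∈ K, φ x = ψ x + c := by
  let periods := AddSubgroup.zmultiples (2 * Real.pi * Complex.I)
  have mem_periods (z : ℂ) : z ∈ periods ↔ Complex.exp z = 1 := by
    rw [AddSubgroup.mem_zmultiples_iff, Complex.exp_eq_one_iff]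
    simp only [zsmul_eq_mul, eq_comm]
  have hmaps : MapsTo (fun x ↦ φ x - ψ x) K periods := fun x hx ↦ by
    rw [SetLike.mem_coe, mem_periods, Complex.exp_sub, hexp x hx, div_self (Complex.exp_ne_zero _)]
  obtain ⟨c, hc, hcK⟩ := hK.eqOn_const_of_mapsTo
    ⟨NormedSpace.discreteTopology_zmultiples _⟩ (hφ.sub hψ) hmaps ⟨0, periods.zero_mem⟩
  exact ⟨c, (mem_periods c).1 hc, fun x hx ↦ sub_eq_iff_eq_add'.1 (hcK hx)⟩

lemma HasLogOn.union (hK : IsClosed K) (hL : IsClosed L) (hKL : IsPreconnected (K ∩ L))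
    (hfK : HasLogOn f K) (hfL : HasLogOn f L) : HasLogOn f (K ∪ L) := by
  classical
  obtain ⟨φ, hφ, hφf⟩ := hfK
  obtain ⟨ψ, hψ, hψf⟩ := hfL
  obtain ⟨c, hc, hφψ⟩ := exists_exp_eq_one_forall_eq_add hKL (hφ.mono inter_subset_left)
    (hψ.mono inter_subset_right) fun x hx ↦ (hφf x hx.1).trans (hψf x hx.2).symm
  let χ := K.piecewise φ fun x ↦ ψ x + c
  have hχK : EqOn χ φ K := piecewise_eqOn K _ _
  have hχL : EqOn χ (fun x ↦ ψ x + c) L := fun x hx ↦ by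
    by_cases hxK : x ∈ K
    · exact (hχK hxK).trans (hφψ x ⟨hxK, hx⟩)
    · exact piecewise_eq_of_notMem K _ _ hxK
  refine ⟨χ, (hφ.congr hχK).union_of_isClosed ((hψ.add continuousOn_const).congr hχL) hK hL, ?_⟩
  rintro x (hx | hx)
  · rw [hχK hx, hφf x hx]
  · rw [hχL hx, Complex.exp_add, hc, mul_one, hψf x hx]

lemma HasLogOn.exists_continuous_ne_zero_eqOn_compl [NormalSpace X] (hK : IsClosed K) {U : Set X}
    (hU : frontier U ⊆ K) (hf : Continuous f) (hg : Continuous g) (hfU : ∀ x ∉ U, f x ≠ 0)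
    (hgU : ∀ x ∈ U, g x ≠ 0) (hlog : HasLogOn (f / g) K) :
    ∃ F : X → ℂ, Continuous F ∧ (∀ x, F x ≠ 0) ∧ EqOn F f Uᶜ := by
  classical
  have hgK (x : X) (hx : x ∈ K) : g x ≠ 0 := (div_ne_zero_iff.1 (hlog.ne_zero hx)).2
  obtain ⟨φ, hφ, hφfg⟩ := hlog
  obtain ⟨Φ, hΦ⟩ := ContinuousMap.exists_restrict_eq hK
    (⟨K.domRestrict φ, hφ.domRestrict⟩ : C(K, ℂ))
  have hΦK (x : X) (hx : x ∈ K) : Φ x = φ x := DFunLike.congr_fun hΦ ⟨x, hx⟩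
  refine ⟨U.piecewise (fun x ↦ g x * Complex.exp (Φ x)) f, ?_, fun x ↦ ?_,
    piecewise_eqOn_compl U _ _⟩
  · refine Continuous.piecewise (fun x hx ↦ ?_) (by fun_prop) hf
    rw [hΦK x (hU hx), hφfg x (hU hx), Pi.div_apply, mul_div_cancel₀ _ (hgK x (hU hx))]
  · by_cases hx : x ∈ U
    · rw [piecewise_eq_of_mem _ _ _ hx]
      exact mul_ne_zero (hgU x hx) (Complex.exp_ne_zero _)
    · rw [piecewise_eq_of_notMem _ _ _ hx]
      exact hfU x hx

end HasLogOn

section Eilenberg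

lemma not_hasLogOn_sub_sphere (p : ℂ) {r : ℝ} (hr : 0 < r) :
    ¬ HasLogOn (fun z ↦ z - p) (sphere p r) := by
  -- Along the circle `φ` would differ from `log r + θ * I` by a constant, but `φ` returns to its
  -- value after one turn.
  rintro ⟨φ, hφ, hφp⟩
  have hcircle (θ : ℝ) : circleMap p r θ ∈ sphere p r := circleMap_mem_sphere p hr.le θ
  have hexp (θ : ℝ) : Complex.exp (φ (circleMap p r θ)) =
      Complex.exp (Real.log r + θ * Complex.I) := by
    have hφθ : Complex.exp (φ (circleMap p r θ)) = circleMap p r θ - p := hφp _ (hcircle θ)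
    rw [hφθ, circleMap_sub_center, circleMap_zero, Complex.exp_add,
      ← Complex.ofReal_exp, Real.exp_log hr]
  obtain ⟨c, -, hc⟩ := exists_exp_eq_one_forall_eq_add isPreconnected_univ
    (hφ.comp (continuous_circleMap p r).continuousOn fun θ _ ↦ hcircle θ)
    (by fun_prop) fun θ _ ↦ hexp θ
  have h0 := hc 0 (mem_univ _)
  have h2π := hc (2 * Real.pi) (mem_univ _)
  rw [Function.comp_apply, (periodic_circleMap p r).eq, ← Function.comp_apply (f := φ), h0] at h2π
  simp at h2π

variable {K : Set ℂ} {p q : ℂ}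

lemma hasLogOn_ratio_trans {r : ℂ} (hpq : HasLogOn (fun z ↦ (z - p) / (z - q)) K)
    (hqr : HasLogOn (fun z ↦ (z - q) / (z - r)) K) : HasLogOn (fun z ↦ (z - p) / (z - r)) K :=
  (hpq.mul hqr).congr fun _ hz ↦ div_mul_div_cancel₀ (div_ne_zero_iff.1 (hpq.ne_zero hz)).2

lemma hasLogOn_ratio_symm (hpq : HasLogOn (fun z ↦ (z - p) / (z - q)) K) :
    HasLogOn (fun z ↦ (z - q) / (z - p)) K :=
  hpq.inv.congr fun _ _ ↦ inv_div _ _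

lemma hasLogOn_ratio_of_dist_lt (hpq : ∀ z ∈ K, dist p q < dist z q) :
    HasLogOn (fun z ↦ (z - p) / (z - q)) K := by
  have hq (z : ℂ) (hz : z ∈ K) : z - q ≠ 0 :=
    sub_ne_zero.2 (dist_pos.1 (dist_nonneg.trans_lt (hpq z hz)))
  refine hasLogOn_of_mem_slitPlane (ContinuousOn.div (by fun_prop) (by fun_prop) hq) fun z hz ↦ ?_
  have hratio : (z - p) / (z - q) = 1 + (q - p) / (z - q) := by
    rw [one_add_div (hq z hz), sub_add_sub_cancel]
  rw [hratio]
  apply Complex.mem_slitPlane_of_norm_lt_one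
  rw [norm_div, div_lt_one (norm_pos_iff.2 (hq z hz)), ← dist_eq_norm, ← dist_eq_norm, dist_comm q]
  exact hpq z hz

lemma hasLogOn_ratio_of_mem_connectedComponentIn (hK : IsClosed K)
    (hq : q ∈ connectedComponentIn Kᶜ p) : HasLogOn (fun z ↦ (z - p) / (z - q)) K := by
  have hp : p ∈ Kᶜ := connectedComponentIn_nonempty_iff.1 ⟨q, hq⟩
  have hsub := connectedComponentIn_subset Kᶜ p
  refine isPreconnected_connectedComponentIn.induction₂'
    (fun a b ↦ HasLogOn (fun z ↦ (z - a) / (z - b)) K) (fun x hx ↦ ?_)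
    (fun _ _ _ _ _ _ ↦ hasLogOn_ratio_trans) (mem_connectedComponentIn hp) hq
  obtain ⟨δ, hδ, hball⟩ := Metric.isOpen_iff.1 hK.isOpen_compl x (hsub hx)
  filter_upwards [nhdsWithin_le_nhds (ball_mem_nhds x hδ)] with y hy
  have hlog : HasLogOn (fun z ↦ (z - y) / (z - x)) K := hasLogOn_ratio_of_dist_lt fun z hz ↦
    (mem_ball.1 hy).trans_le (not_lt.1 fun hzx ↦ hball hzx hz)
  exact ⟨hasLogOn_ratio_symm hlog, hlog⟩

lemma mem_connectedComponentIn_of_hasLogOn_ratio_of_isBounded (hK : IsClosed K) (hp : p ∉ K)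
    (hb : IsBounded (connectedComponentIn Kᶜ p))
    (hlog : HasLogOn (fun z ↦ (z - p) / (z - q)) K) : q ∈ connectedComponentIn Kᶜ p := by
  by_contra hq
  set U := connectedComponentIn Kᶜ p
  have hpU : p ∈ U := mem_connectedComponentIn hp
  have hUK : frontier U ⊆ K := by
    simpa using frontier_connectedComponentIn_subset_compl hK.isOpen_compl p
  -- `F` has a logarithm on the plane and agrees with `z - p` on a circle enclosing `U`.
  obtain ⟨F, hF, hF0, hFU⟩ := HasLogOn.exists_continuous_ne_zero_eqOn_compl (f := (· - p))
    (g := (· - q)) hK hUK (by fun_prop) (by fun_prop)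
    (fun z hz ↦ sub_ne_zero.2 (ne_of_mem_of_not_mem hpU hz).symm)
    (fun z hz ↦ sub_ne_zero.2 (ne_of_mem_of_not_mem hz hq)) hlog
  obtain ⟨r, hr, hUr⟩ := hb.subset_ball_lt 0 p
  have hsphere : sphere p r ⊆ Uᶜ :=
    subset_compl_iff_disjoint_left.2 (sphere_disjoint_ball.symm.mono_left hUr)
  exact not_hasLogOn_sub_sphere p hr
    (((hasLogOn_univ hF hF0).mono (subset_univ _)).congr (hFU.mono hsphere))

/-- Eilenberg's criterion. -/
theorem hasLogOn_ratio_iff_mem_connectedComponentIn (hK : IsCompact K) :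
    HasLogOn (fun z ↦ (z - p) / (z - q)) K ↔ q ∈ connectedComponentIn Kᶜ p := by
  refine ⟨fun hlog ↦ ?_, hasLogOn_ratio_of_mem_connectedComponentIn hK.isClosed⟩
  have hpK : p ∉ K := fun h ↦ hlog.ne_zero h (by simp)
  have hqK : q ∉ K := fun h ↦ hlog.ne_zero h (by simp)
  by_cases hp : IsBounded (connectedComponentIn Kᶜ p)
  · exact mem_connectedComponentIn_of_hasLogOn_ratio_of_isBounded hK.isClosed hpK hp hlog
  by_cases hq : IsBounded (connectedComponentIn Kᶜ q)
  · have hpq := mem_connectedComponentIn_of_hasLogOn_ratio_of_isBounded hK.isClosed hqK hq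
      (hasLogOn_ratio_symm hlog)
    exact connectedComponentIn_eq hpq ▸ mem_connectedComponentIn hqK
  · exact mem_connectedComponentIn_compl_of_not_isBounded (by simp) hK.isBounded hp hq

end Eilenberg

section HomeomorphicToPlane

variable {X : Type*} [TopologicalSpace X] {K K₁ K₂ : Set X} {p q : X}

lemma hasLogOn_ratio_iff_mem_connectedComponentIn_of_homeomorph (e : X ≃ₜ ℂ) (hK : IsCompact K) :
    HasLogOn (fun x ↦ (e x - e p) / (e x - e q)) K ↔ q ∈ connectedComponentIn Kᶜ p := by
  have hratio : HasLogOn (fun x ↦ (e x - e p) / (e x - e q)) K ↔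
      HasLogOn (fun z ↦ (z - e p) / (z - e q)) (e '' K) := by
    refine ⟨fun h ↦ ?_, fun h ↦ h.comp e.continuous.continuousOn (mapsTo_image e K)⟩
    refine (h.comp e.symm.continuous.continuousOn ?_).congr fun z _ ↦ by simp
    exact mapsTo_image_iff.2 fun x hx ↦ by simpa using hx
  rw [hratio, hasLogOn_ratio_iff_mem_connectedComponentIn (hK.image e.continuous),
    ← image_compl_eq e.bijective]
  by_cases hp : p ∈ Kᶜ
  · rw [← e.image_connectedComponentIn hp, e.injective.mem_set_image]
  · rw [connectedComponentIn_eq_empty hp,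
      connectedComponentIn_eq_empty (mt e.injective.mem_set_image.1 hp)]
    exact iff_of_false (notMem_empty _) (notMem_empty _)

/-- Janiszewski's theorem. -/
theorem mem_connectedComponentIn_compl_union (e : X ≃ₜ ℂ) (hK₁ : IsCompact K₁)
    (hK₂ : IsCompact K₂) (hK : IsPreconnected (K₁ ∩ K₂)) (h₁ : q ∈ connectedComponentIn K₁ᶜ p)
    (h₂ : q ∈ connectedComponentIn K₂ᶜ p) : q ∈ connectedComponentIn (K₁ ∪ K₂)ᶜ p := by
  have : T2Space X := e.isEmbedding.t2Space
  rw [← hasLogOn_ratio_iff_mem_connectedComponentIn_of_homeomorph e] at h₁ h₂ ⊢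
  exacts [HasLogOn.union hK₁.isClosed hK₂.isClosed hK h₁ h₂, hK₁.union hK₂, hK₂, hK₁]

lemma isPreconnected_compl_of_forall_hasLogOn (e : X ≃ₜ ℂ) (hK : IsCompact K)
    (hlog : ∀ f : X → ℂ, ContinuousOn f K → (∀ x ∈ K, f x ≠ 0) → HasLogOn f K) :
    IsPreconnected Kᶜ := by
  refine isPreconnected_of_forall_pair fun p hp q hq ↦ ⟨connectedComponentIn Kᶜ p,
    connectedComponentIn_subset _ _, mem_connectedComponentIn hp, ?_,
    isPreconnected_connectedComponentIn⟩
  have he0 {a : X} (ha : a ∉ K) (x : X) (hx : x ∈ K) : e x - e a ≠ 0 :=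
    sub_ne_zero.2 (e.injective.ne (ne_of_mem_of_not_mem hx ha))
  exact (hasLogOn_ratio_iff_mem_connectedComponentIn_of_homeomorph e hK).1 (hlog _
    (ContinuousOn.div (by fun_prop) (by fun_prop) (he0 hq))
    fun x hx ↦ div_ne_zero (he0 hp x hx) (he0 hq x hx))

lemma isPreconnected_compl_image_Icc (e : X ≃ₜ ℂ) {a b : ℝ} (hab : a ≤ b) {f : ℝ → X}
    (hf : ContinuousOn f (Icc a b)) (hinj : InjOn f (Icc a b)) :
    IsPreconnected (f '' Icc a b)ᶜ := by
  have : T2Space X := e.isEmbedding.t2Space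
  refine isPreconnected_compl_of_forall_hasLogOn e (isCompact_Icc.image_of_continuousOn hf)
    fun g hg hg0 ↦ ?_
  have hemb : IsEmbedding ((Icc a b).domRestrict f) :=
    (hf.domRestrict.isClosedEmbedding hinj.injective).isEmbedding
  rw [← range_domRestrict]
  refine hasLogOn_range_of_isEmbedding hemb (hasLogOn_univ_of_Icc hab ?_ ?_)
  · exact hg.comp_continuous hf.domRestrict fun x ↦ mem_image_of_mem f x.2
  · exact fun x ↦ hg0 _ (mem_image_of_mem f x.2)

end HomeomorphicToPlane

section Curves

variable {P α : Set (ℝ × ℝ)} {a b s t u v : ℝ × ℝ}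

lemma IsArc.isCompact (h : IsArc α a b) : IsCompact α := by
  obtain ⟨f, hf, -, -, -, rfl⟩ := h
  exact isCompact_Icc.image_of_continuousOn hf

lemma IsArc.isPreconnected (h : IsArc α a b) : IsPreconnected α := by
  obtain ⟨f, hf, -, -, -, rfl⟩ := h
  exact isPreconnected_Icc.image f hf

lemma IsArc.exists_sdiff_eq_image_Ioo (h : IsArc α a b) : ∃ f : ℝ → ℝ × ℝ,
    ContinuousOn f (Icc 0 1) ∧ f 0 = a ∧ f 1 = b ∧ α \ {a, b} = f '' Ioo 0 1 := by
  obtain ⟨f, hf, hinj, rfl, rfl, rfl⟩ := h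
  refine ⟨f, hf, rfl, rfl, ?_⟩
  rw [← Icc_sdiff_both, hinj.image_sdiff_subset (by simp [insert_subset_iff]), image_pair]

lemma IsArc.isPreconnected_sdiff (h : IsArc α a b) : IsPreconnected (α \ {a, b}) := by
  obtain ⟨f, hf, -, -, hα⟩ := h.exists_sdiff_eq_image_Ioo
  exact hα ▸ isPreconnected_Ioo.image f (hf.mono Ioo_subset_Icc_self)

lemma IsArc.subset_closure_sdiff (h : IsArc α a b) : {a, b} ⊆ closure (α \ {a, b}) := by
  obtain ⟨f, hf, rfl, rfl, hα⟩ := h.exists_sdiff_eq_image_Ioo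
  have hmem {x : ℝ} (hx : x ∈ Icc (0 : ℝ) 1) : f x ∈ closure (α \ {f 0, f 1}) := by
    rw [hα]
    refine ((hf x hx).mono Ioo_subset_Icc_self).mem_closure_image ?_
    rwa [closure_Ioo zero_ne_one]
  exact pair_subset (hmem (left_mem_Icc.2 zero_le_one)) (hmem (right_mem_Icc.2 zero_le_one))

lemma IsSimpleClosedCurve.isCompact (hP : IsSimpleClosedCurve P) : IsCompact P := by
  obtain ⟨f, hf, -, rfl⟩ := hP
  exact isCompact_range hf

lemma exists_compl_subset_image_Icc_of_mem_nhds {T : ℝ} [hT : Fact (0 < T)] {ξ : AddCircle T}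
    {V : Set (AddCircle T)} (hV : V ∈ 𝓝 ξ) :
    ∃ a b : ℝ, a ≤ b ∧ b < a + T ∧ Vᶜ ⊆ (fun r : ℝ ↦ (r : AddCircle T)) '' Icc a b := by
  obtain ⟨c, rfl⟩ := QuotientAddGroup.mk_surjective ξ
  obtain ⟨ε, hε, hball⟩ :=
    Metric.mem_nhds_iff.1 ((AddCircle.continuous_mk' T).continuousAt.preimage_mem_nhds hV)
  obtain ⟨δ, hδ, hδε⟩ := exists_between (lt_min hε (half_pos hT.out))
  have hδT : δ < T / 2 := hδε.trans_le (min_le_right _ _)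
  have hmemV {r : ℝ} (hr : |r - c| < δ) : (r : AddCircle T) ∈ V :=
    hball (mem_ball.2 (hr.trans (hδε.trans_le (min_le_left _ _))))
  refine ⟨c + δ, c + T - δ, by linarith, by linarith, fun η hη ↦ ?_⟩
  obtain ⟨r, hr, rfl⟩ := (AddCircle.coe_image_Ico_eq T c).superset (mem_univ η)
  refine ⟨r, ⟨?_, ?_⟩, rfl⟩ <;> by_contra! hlt
  · exact hη (hmemV (abs_lt.2 ⟨by linarith [hr.1], by linarith⟩))
  · have hperiod : ((r - T : ℝ) : AddCircle T) = r := by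
      rw [← AddCircle.coe_add_period, sub_add_cancel]
    exact hη (hperiod ▸ hmemV (abs_lt.2 ⟨by linarith, by linarith [hr.2]⟩))

lemma IsSimpleClosedCurve.exists_subset_isPreconnected_compl (hP : IsSimpleClosedCurve P)
    {x : ℝ × ℝ} (hx : x ∈ P) {U : Set (ℝ × ℝ)} (hU : U ∈ 𝓝 x) :
    ∃ A ⊆ P, P \ U ⊆ A ∧ IsPreconnected Aᶜ := by
  obtain ⟨f, hf, hinj, rfl⟩ := hP
  obtain ⟨ξ, rfl⟩ := hx
  obtain ⟨a, b, hab, hba, hV⟩ :=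
    exists_compl_subset_image_Icc_of_mem_nhds (hf.continuousAt.preimage_mem_nhds hU)
  let g : ℝ → ℝ × ℝ := fun r ↦ f (r : AddCircle (1 : ℝ))
  have hg : Continuous g := hf.comp (AddCircle.continuous_mk' 1)
  have hIco : Icc a b ⊆ Ico a (a + 1) := Icc_subset_Ico_right hba
  have hginj : InjOn g (Icc a b) := fun r hr r' hr' h ↦
    (AddCircle.coe_eq_coe_iff_of_mem_Ico (hIco hr) (hIco hr')).1 (hinj h)
  refine ⟨g '' Icc a b, image_subset_iff.2 fun r _ ↦ mem_range_self _, ?_,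
    isPreconnected_compl_image_Icc Complex.equivRealProdCLM.symm.toHomeomorph hab
      hg.continuousOn hginj⟩
  rintro _ ⟨⟨η, rfl⟩, hη⟩
  obtain ⟨r, hr, rfl⟩ := hV hη
  exact mem_image_of_mem g hr

lemma Interleaved.exists_isCompact_cover (hP : IsSimpleClosedCurve P) (h : Interleaved P s u t v) :
    ∃ A₁ A₂ : Set (ℝ × ℝ), IsCompact A₁ ∧ IsCompact A₂ ∧ A₁ ∪ A₂ = P ∧ A₁ ∩ A₂ ⊆ {s, t} ∧
      u ∉ A₂ ∧ v ∉ A₁ := by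
  have : LocallyPathConnectedSpace (AddCircle (1 : ℝ)) :=
    inferInstanceAs (LocallyPathConnectedSpace (Quotient _))
  obtain ⟨f, hf, hinj, rfl⟩ := hP
  obtain ⟨⟨s, rfl⟩, ⟨u, rfl⟩, ⟨t, rfl⟩, ⟨v, rfl⟩, hdistinct, hne⟩ := h
  have himage : f '' {s, t}ᶜ = range f \ {f s, f t} := by
    rw [image_compl_eq_range_sdiff_image hinj, image_pair]
  have huK : u ∉ ({s, t} : Set (AddCircle (1 : ℝ))) := by
    rintro (rfl | rfl) <;> simp at hdistinct
  have hvK : v ∉ ({s, t} : Set (AddCircle (1 : ℝ))) := by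
    rintro (rfl | rfl) <;> simp at hdistinct
  have hne' : connectedComponentIn {s, t}ᶜ u ≠ connectedComponentIn {s, t}ᶜ v := fun huv ↦ by
    rw [← himage] at hne
    refine hne (connectedComponentIn_eq ?_).symm
    exact hf.continuousOn.image_connectedComponentIn_subset hvK
      (mem_image_of_mem f (huv ▸ mem_connectedComponentIn huK))
  obtain ⟨A₁, A₂, hA₁, hA₂, hcover, hinter, hu, hv⟩ :=
    exists_isClosed_cover_of_connectedComponentIn_ne (toFinite {s, t}).isClosed huK hvK hne'
  refine ⟨f '' A₁, f '' A₂, hA₁.isCompact.image hf, hA₂.isCompact.image hf, ?_, ?_, ?_, ?_⟩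
  · rw [← image_union, hcover, image_univ]
  · rw [← image_inter hinj, ← image_pair]
    exact image_mono hinter
  · rwa [hinj.mem_set_image]
  · rwa [hinj.mem_set_image]

lemma Interleaved.pair_subset_sdiff (h : Interleaved P s u t v) : {s, t} ⊆ P \ {u, v} := by
  obtain ⟨hs, -, ht, -, hdistinct, -⟩ := h
  rw [pair_subset_iff]
  simp_all [eq_comm]

lemma nonempty_jordanExterior (hP : IsBounded P) : (JordanExterior P).Nonempty :=
  exists_not_isBounded_connectedComponentIn_compl (by simp [one_add_one_eq_two]) hP

lemma disjoint_connectedComponentIn_jordanInterior {e : ℝ × ℝ} (he : e ∈ JordanExterior P) :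
    Disjoint (connectedComponentIn Pᶜ e) (JordanInterior P) :=
  disjoint_left.2 fun _ hxe hx ↦ he.2 (connectedComponentIn_eq hxe ▸ hx.2)

lemma notMem_connectedComponentIn_of_mem_jordanInterior {e w : ℝ × ℝ} (he : e ∈ JordanExterior P)
    (hw : w ∈ JordanInterior P) : e ∉ connectedComponentIn Pᶜ w :=
  fun hew ↦ he.2 (connectedComponentIn_eq hew ▸ hw.2)

lemma IsSimpleClosedCurve.subset_closure_connectedComponentIn (hP : IsSimpleClosedCurve P)
    {e w : ℝ × ℝ} (he : e ∈ JordanExterior P) (hw : w ∈ JordanInterior P) :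
    P ⊆ closure (connectedComponentIn Pᶜ e) := by
  have hsep : ¬ IsPreconnected Pᶜ := fun h ↦ notMem_connectedComponentIn_of_mem_jordanInterior he hw
    (h.subset_connectedComponentIn hw.1 Subset.rfl he.1)
  have hfrontier : frontier (connectedComponentIn Pᶜ e) = P :=
    frontier_connectedComponentIn_compl_eq hP.isCompact.isClosed
      (fun _ hx _ hU ↦ hP.exists_subset_isPreconnected_compl hx hU) hsep he.1
  exact hfrontier.superset.trans frontier_subset_closure

end Curves

theorem interleaved_interior_chords_cross_general {P : Set (ℝ × ℝ)} (hP : IsSimpleClosedCurve P)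
    {s u t v : ℝ × ℝ} (hcyc : Interleaved P s u t v) {α B : Set (ℝ × ℝ)} (hα : IsCompact α)
    (hαc : IsPreconnected α) (hst : {s, t} ⊆ α) (hαP : α ⊆ P \ {u, v} ∪ JordanInterior P)
    (hB : IsPreconnected B) (hBP : B ⊆ JordanInterior P) (huv : {u, v} ⊆ closure B) :
    (α ∩ B).Nonempty := by
  by_contra hαB
  obtain ⟨e, he⟩ := nonempty_jordanExterior hP.isCompact.isBounded
  obtain ⟨w, hw⟩ : B.Nonempty := closure_nonempty_iff.1 ⟨u, huv (mem_insert u _)⟩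
  have hew := notMem_connectedComponentIn_of_mem_jordanInterior he (hBP hw)
  set E := connectedComponentIn Pᶜ e
  have hEP : E ⊆ Pᶜ := connectedComponentIn_subset _ _
  have hEα : E ⊆ αᶜ := fun x hxE hxα ↦ (hαP hxα).elim (fun hx ↦ hEP hxE hx.1)
    ((disjoint_connectedComponentIn_jordanInterior he).notMem_of_mem_left hxE)
  have hPE : P ⊆ closure E := hP.subset_closure_connectedComponentIn he (hBP hw)
  have hjoin {A : Set (ℝ × ℝ)} (hA : A ⊆ P) {x : ℝ × ℝ} (hx : x ∈ ({u, v} : Set (ℝ × ℝ)))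
      (hxP : x ∈ P) (hxA : x ∉ A) : e ∈ connectedComponentIn (A ∪ α)ᶜ w := by
    have hxα : x ∉ α := fun h ↦ (hαP h).elim (fun h ↦ h.2 hx) fun h ↦ h.1 hxP
    have hBA : B ⊆ (A ∪ α)ᶜ := fun y hy hyA ↦
      hyA.elim (fun h ↦ (hBP hy).1 (hA h)) fun h ↦ hαB ⟨y, h, hy⟩
    have hEA : E ⊆ (A ∪ α)ᶜ := fun y hy hyA ↦ hyA.elim (fun h ↦ hEP hy (hA h)) (hEα hy)
    exact mem_connectedComponentIn_of_mem_closure hB isPreconnected_connectedComponentIn hBA hEA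
      (not_or_intro hxA hxα) (huv hx) (hPE hxP) hw (mem_connectedComponentIn he.1)
  obtain ⟨A₁, A₂, hA₁, hA₂, rfl, hA, huA, hvA⟩ := hcyc.exists_isCompact_cover hP
  have hinter : (A₁ ∪ α) ∩ (A₂ ∪ α) = α := by
    rw [← inter_union_distrib_right, union_eq_right]
    exact hA.trans hst
  refine hew (connectedComponentIn_mono w (compl_subset_compl.2 ?_)
    (mem_connectedComponentIn_compl_union Complex.equivRealProdCLM.symm.toHomeomorph
      (hA₁.union hα) (hA₂.union hα) (hinter.symm ▸ hαc)
      (hjoin subset_union_left (mem_insert_of_mem u rfl) hcyc.2.2.2.1 hvA)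
      (hjoin subset_union_right (mem_insert u _) hcyc.2.1 huA)))
  exact union_subset_union subset_union_left subset_union_left

/-- Interleaved interior chords must cross: if `s, u, t, v` occur in this cyclic order
on a simple closed curve `P`, `α` is a simple arc from `s` to `t` and `β` a simple arc
from `u` to `v`, both meeting `P` only at their endpoints with interiors in `int P`,
then `α` and `β` intersect. -/
theorem interleaved_interior_chords_cross (P : Set (ℝ × ℝ))
    (hP : IsSimpleClosedCurve P) (s u t v : ℝ × ℝ)
    (hcyc : Interleaved P s u t v)
    (α β : Set (ℝ × ℝ)) (hα : IsArc α s t) (hβ : IsArc β u v)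
    (hαP : α ∩ P = {s, t}) (hβP : β ∩ P = {u, v})
    (hαint : α \ {s, t} ⊆ JordanInterior P)
    (hβint : β \ {u, v} ⊆ JordanInterior P) :
    (α ∩ β).Nonempty := by
  have hαP' : α ⊆ P \ {u, v} ∪ JordanInterior P := by
    exact (sdiff_subset_iff.1 hαint).trans (union_subset_union_left _ hcyc.pair_subset_sdiff)
  refine (interleaved_interior_chords_cross_general hP hcyc hα.isCompact hα.isPreconnected
    (hαP ▸ inter_subset_left) hαP' hβ.isPreconnected_sdiff hβint hβ.subset_closure_sdiff).mono ?_
  exact inter_subset_inter_right α sdiff_subset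
end
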